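/- arXiv:1011.4194 — 3 statements merged into one kernel-verified Lean document; each statement's English description precedes it below -/
import Mathlib

section
/- There exist constants C₀, C₁ > 0 such that for every n ∈ ℤ³, every t > 0, and every measurable f : ℝ³ → ℂ with ⟨v⟩³ f ∈ L¹(ℝ³): ‖K_t^{(n)} f‖_{L¹(ℝ³;ℂ)} ≤ (C₁/(1+|n|t)) e^{−C₀ t} ‖⟨v⟩³ f‖_{L¹(ℝ³)}, where (K_t^{(n)} f)(v) := ∫_{ℝ³}∫_{ℝ³} K(v,z) e^{−t(ν(z) + i n·z)} K(z,u) f(u) d³u d³z. -/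
/-!
The decay in `|n| t` comes from the oscillation of `exp (-i t n·z)` in the intermediate velocity `z`.
Rather than integrating by parts, which would require differentiating the singular kernel, the proof
uses that this factor changes sign under the translation `z ↦ z + h` with `h = π n / (t |n|²)`.
Averaging the `z`-integral with its translate (`enorm_integral_osc_le`, `phase_shift`) replaces the
amplitude `K(v,z) exp (-t ν(z)) (K f)(z)` by its increment along `h`, and `|h| = π / (|n| t)` is
the desired gain. When `|n| t ≤ 1` absolute values suffice.

The increments are controlled by a single nonnegative majorant `Pmaj`, which is
`(1 + ‖x‖ + ‖y‖)` times `‖y - x‖⁻² exp (-a² / 2) + exp (-‖x‖² / 4)` with `a` the component of `x`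
along `y - x`: both `|K(x,y)|` and `|K(x,y) - K(x',y')| / d`, for increments of length at most
`d ≤ 4`, are bounded by multiples of it, in the second case of its values at the two endpoints added
together (`Kker_bounds`). An increment of the `‖y - x‖⁻¹` singularity costs one
power of `‖y - x‖⁻¹`, which is still integrable in three dimensions, even when the increment crosses
the singularity. In polar coordinates about `y` the moments of `Pmaj` in `x` are bounded by powers of
`1 + ‖y‖` (`qmaj_moment`), so by Tonelli the composition of two majorants applied to `f` is bounded
in `L¹` by `∫ (1 + ‖u‖)² |f u| du` (`compose_bound`), and `(1 + ‖u‖)² ≤ 2 ⟨u⟩³`.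

The function `ν` is Lipschitz and bounded below by some `m > 0` (`nuT_props`), so `exp (-t ν)` is at
most `exp (-m t)`, and its increment along `h` is at most a multiple of
`t |h| exp (-m t)`, hence of `|h| exp (-m t / 2)`. This gives `C₀ = m / 2`.
-/

open MeasureTheory Real Filter
open scoped InnerProductSpace
noncomputable section

/-- `ℝ³` as a Euclidean space. -/
abbrev V : Type := EuclideanSpace ℝ (Fin 3)

/-- The unit sphere `S² ⊂ ℝ³`. -/
abbrev S2 : Type := Metric.sphere (0 : V) 1

/-- The surface measure on `S²`. -/
noncomputable def σS : Measure S2 := (volume : Measure V).toSphere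

/-- The Japanese bracket `⟨v⟩ = (1+|v|²)^{1/2}`. -/
noncomputable def jap (v : V) : ℝ := Real.sqrt (1 + ‖v‖ ^ 2)

/-- A fundamental domain for the torus `𝕋³ = ℝ³/(2πℤ)³`. -/
def box : Set V := {x | ∀ i : Fin 3, x i ∈ Set.Ico (0 : ℝ) (2 * π)}

/-- The standard basis vectors of `ℝ³`. -/
noncomputable def eV (i : Fin 3) : V := EuclideanSpace.single i (1 : ℝ)

/-- The `i`-th partial derivative in the `x` variable. -/
noncomputable def pdX (i : Fin 3) (f : V → V → ℝ) : V → V → ℝ :=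
  fun v x => fderiv ℝ (f v) x (eV i)

/-- The iterated `x`-derivative `∂ₓ^α`. -/
noncomputable def pdA (α : Fin 3 → ℕ) (f : V → V → ℝ) : V → V → ℝ :=
  (pdX 0)^[α 0] ((pdX 1)^[α 1] ((pdX 2)^[α 2] f))

/-- `2π`-periodicity in the `x` variable (i.e. being a function on `ℝ³ × 𝕋³`). -/
def PeriodicX (f : V → V → ℝ) : Prop :=
  ∀ v x (i : Fin 3), f v (x + (2 * π) • eV i) = f v x

/-- Sum of `F α` over all multi-indices `α` with `|α| ≤ N`. -/
noncomputable def msum (N : ℕ) (F : (Fin 3 → ℕ) → ℝ) : ℝ :=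
  ∑ α : Fin 3 → Fin (N + 1),
    if (α 0 : ℕ) + (α 1 : ℕ) + (α 2 : ℕ) ≤ N then F (fun i => (α i : ℕ)) else 0

/-- The hard-sphere collision operator `Q(f,g)`. -/
noncomputable def Qop (f g : V → ℝ) (v : V) : ℝ :=
  ∫ u : V, ∫ ω : S2, |⟪u - v, (ω : V)⟫_ℝ| *
    (f (u - ⟪u - v, (ω : V)⟫_ℝ • (ω : V)) * g (v + ⟪u - v, (ω : V)⟫_ℝ • (ω : V))
      - f u * g v) ∂σS

/-- `Q` acting in the `v` variable for each fixed `x`. -/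
noncomputable def QopX (f g : V → V → ℝ) (v x : V) : ℝ :=
  Qop (fun u => f u x) (fun u => g u x) v

/-- `ν₀(v) = ∫ r₀(u,v) du`. -/
noncomputable def nu0 (r₀ : V → V → ℝ) (v : V) : ℝ := ∫ u : V, r₀ u v

/-- `(K₀ f)(v) = ∫ r₀(v,u) f(u) du`. -/
noncomputable def K0 (r₀ : V → V → ℝ) (f : V → ℝ) (v : V) : ℝ := ∫ u : V, r₀ v u * f u

/-- `K₀` acting in the `v` variable for each fixed `x`. -/
noncomputable def K0X (r₀ : V → V → ℝ) (f : V → V → ℝ) (v x : V) : ℝ :=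
  K0 r₀ (fun u => f u x) v

/-- `ν₁(v) = ∫∫ |(u−v)·ω| e^{−|u|²} du dω`. -/
noncomputable def nu1 (v : V) : ℝ :=
  ∫ u : V, ∫ ω : S2, |⟪u - v, (ω : V)⟫_ℝ| * Real.exp (-‖u‖ ^ 2) ∂σS

/-- Glassey's explicit form of `K₁`. -/
noncomputable def K1 (f : V → ℝ) (v : V) : ℝ :=
  2 * π * ∫ u : V, ‖u - v‖⁻¹ * Real.exp (-(⟪u - v, v⟫_ℝ ^ 2 / ‖u - v‖ ^ 2)) * f u
    - π * ∫ u : V, ‖u - v‖ * Real.exp (-‖v‖ ^ 2) * f u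

/-- `K₁` acting in the `v` variable for each fixed `x`. -/
noncomputable def K1X (f : V → V → ℝ) (v x : V) : ℝ := K1 (fun u => f u x) v

/-- Pointwise two-sided bound `C⁻¹ e^{−|u|²}⟨u−v⟩ ≤ r₀(u,v) ≤ C e^{−|u|²}⟨u−v⟩`. -/
def R0Bounds (r₀ : V → V → ℝ) (C : ℝ) : Prop :=
  ∀ u v : V, C⁻¹ * (Real.exp (-‖u‖ ^ 2) * jap (u - v)) ≤ r₀ u v ∧
    r₀ u v ≤ C * (Real.exp (-‖u‖ ^ 2) * jap (u - v))

/-- Detailed balance: `r₀(u,v) = r₀(v,u) e^{|v|²−|u|²}`. -/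
def R0DetailedBalance (r₀ : V → V → ℝ) : Prop :=
  ∀ u v : V, r₀ u v = r₀ v u * Real.exp (‖v‖ ^ 2 - ‖u‖ ^ 2)

/-- The bounds `|∂ᵤᵏ∂ᵥˡ r₀(u,v)| ≤ C₂ e^{−|u|²/2} ⟨u−v⟩^{1−l}` for `k+l ≤ 1`. -/
def R0DerivBounds (r₀ : V → V → ℝ) (C₂ : ℝ) : Prop :=
  ∀ u v : V,
    |r₀ u v| ≤ C₂ * (Real.exp (-‖u‖ ^ 2 / 2) * jap (u - v)) ∧
    ‖fderiv ℝ (fun u' => r₀ u' v) u‖ ≤ C₂ * (Real.exp (-‖u‖ ^ 2 / 2) * jap (u - v)) ∧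
    ‖fderiv ℝ (fun v' => r₀ u v') v‖ ≤ C₂ * Real.exp (-‖u‖ ^ 2 / 2)

/-- `ν = ν₀ + C∞ κ ν₁`. -/
noncomputable def nuT (r₀ : V → V → ℝ) (Ci κ : ℝ) (v : V) : ℝ :=
  nu0 r₀ v + Ci * κ * nu1 v

/-- The integral kernel `K(v,u)` of `K = −K₀ + C∞ κ K₁`. -/
noncomputable def Kker (r₀ : V → V → ℝ) (Ci κ : ℝ) (v u : V) : ℝ :=
  -r₀ v u + Ci * κ *
    (2 * π * (‖u - v‖⁻¹ * Real.exp (-(⟪u - v, v⟫_ℝ ^ 2 / ‖u - v‖ ^ 2)))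
      - π * (‖u - v‖ * Real.exp (-‖v‖ ^ 2)))

/-- `n ∈ ℤ³` as a vector in `ℝ³`. -/
noncomputable def nV (n : Fin 3 → ℤ) : V :=
  (WithLp.equiv 2 (Fin 3 → ℝ)).symm (fun i => (n i : ℝ))

/-- The operator `K_t^{(n)} = K e^{−t(ν + i n·v)} K`, given by its kernel. -/
noncomputable def Ktn (r₀ : V → V → ℝ) (Ci κ : ℝ) (n : Fin 3 → ℤ) (t : ℝ)
    (f : V → ℂ) (v : V) : ℂ :=
  ∫ z : V, ∫ u : V, (Kker r₀ Ci κ v z : ℂ) *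
    Complex.exp (-(t : ℂ) * ((nuT r₀ Ci κ z : ℝ) + Complex.I * ((∑ i : Fin 3, (n i : ℝ) * z i : ℝ) : ℂ))) *
    (Kker r₀ Ci κ z u : ℂ) * f u

/-! ### The majorant and increments of the kernel of `K₁` -/

/-- The Gaussian is Lipschitz with a constant that is itself Gaussian: halving the exponent absorbs
the factor `|a| + |b|` and also covers large increments. -/
lemma exp_sq_sub_le (a b : ℝ) :
    |Real.exp (-a ^ 2) - Real.exp (-b ^ 2)| ≤
      3 * |a - b| * (Real.exp (-a ^ 2 / 2) + Real.exp (-b ^ 2 / 2)) := by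
  have key : ∀ a b : ℝ, |a| ≤ |b| → |Real.exp (-a ^ 2) - Real.exp (-b ^ 2)| ≤
      3 * |a - b| * Real.exp (-a ^ 2 / 2) := by
    intro a b hab
    have hsq : a ^ 2 ≤ b ^ 2 := sq_le_sq.2 hab
    have h0 : Real.exp (-b ^ 2) ≤ Real.exp (-a ^ 2) := Real.exp_le_exp.2 (by linarith)
    rw [abs_of_nonneg (by linarith)]
    set δ := |a - b| with hδ
    have hδ0 : 0 ≤ δ := abs_nonneg _
    have hbδ : |b| ≤ |a| + δ := by
      have := abs_sub_abs_le_abs_sub b a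
      rw [abs_sub_comm] at this
      linarith
    have he : Real.exp (-a ^ 2) = Real.exp (-a ^ 2 / 2) * Real.exp (-a ^ 2 / 2) := by
      rw [← Real.exp_add]; ring_nf
    have hE0 : 0 < Real.exp (-a ^ 2 / 2) := Real.exp_pos _
    have hE1 : Real.exp (-a ^ 2 / 2) ≤ 1 := Real.exp_le_one_iff.2 (by nlinarith [sq_nonneg a])
    rcases le_total 1 δ with h1 | h1
    · have := (Real.exp_pos (-b ^ 2)).le
      nlinarith
    · have h2 : Real.exp (-a ^ 2) - Real.exp (-b ^ 2) ≤ Real.exp (-a ^ 2) * (b ^ 2 - a ^ 2) := by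
        have : Real.exp (-b ^ 2) = Real.exp (-a ^ 2) * Real.exp (-(b ^ 2 - a ^ 2)) := by
          rw [← Real.exp_add]; ring_nf
        rw [this]
        have h3 := Real.add_one_le_exp (-(b ^ 2 - a ^ 2))
        nlinarith [Real.exp_pos (-a ^ 2)]
      have h4 : b ^ 2 - a ^ 2 ≤ δ * (2 * |a| + 1) := by
        rw [← sq_abs a, ← sq_abs b]
        nlinarith [abs_nonneg a, abs_nonneg b]
      have h5 : (2 * |a| + 1) * Real.exp (-a ^ 2 / 2) ≤ 3 := by
        have h6 := Real.add_one_le_exp (a ^ 2 / 2)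
        have h7 : 2 * |a| + 1 ≤ 3 * Real.exp (a ^ 2 / 2) := by
          rw [← sq_abs a] at h6 ⊢
          nlinarith [sq_nonneg (|a| - 1)]
        calc _ ≤ 3 * Real.exp (a ^ 2 / 2) * Real.exp (-a ^ 2 / 2) := by gcongr
          _ = 3 := by rw [mul_assoc, ← Real.exp_add]; ring_nf; simp
      calc _ ≤ Real.exp (-a ^ 2) * (δ * (2 * |a| + 1)) := h2.trans (by gcongr)
        _ = δ * ((2 * |a| + 1) * Real.exp (-a ^ 2 / 2)) * Real.exp (-a ^ 2 / 2) := by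
            rw [he]; ring
        _ ≤ δ * 3 * Real.exp (-a ^ 2 / 2) := by gcongr
        _ = _ := by ring
  have ha := Real.exp_pos (-a ^ 2 / 2)
  have hb := Real.exp_pos (-b ^ 2 / 2)
  rcases le_total |a| |b| with h | h
  · refine (key a b h).trans ?_
    gcongr; linarith
  · rw [abs_sub_comm, abs_sub_comm a b]
    refine (key b a h).trans ?_
    gcongr; linarith

/-- Scalar model of the difference of two values of the singular part of the kernel. Here `r` and `a`
stand for `‖y - x‖` and the component of `x` along `y - x`; the price of the increment `d` is one
more power of `r⁻¹`, on one of the two sides. The values at `r = 0` or `r' = 0` are the junk values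
`0`, and are covered because then the other radius is at most `d`. -/
lemma singular_core {r r' a a' d D : ℝ} (hr : 0 ≤ r) (hr' : 0 ≤ r') (hd : |r - r'| ≤ d)
    (hD : 0 ≤ D) (h1 : r ≠ 0 → r' ≠ 0 → |a - a'| * r ≤ d * D)
    (h2 : r ≠ 0 → r' ≠ 0 → |a - a'| * r' ≤ d * D) :
    |r⁻¹ * Real.exp (-a ^ 2) - r'⁻¹ * Real.exp (-a' ^ 2)| ≤
      d * (1 + 3 * D) * (r⁻¹ ^ 2 * Real.exp (-a ^ 2 / 2) + r'⁻¹ ^ 2 * Real.exp (-a' ^ 2 / 2)) := by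
  have hd0 : 0 ≤ d := (abs_nonneg _).trans hd
  have hhalf : ∀ x : ℝ, Real.exp (-x ^ 2) ≤ Real.exp (-x ^ 2 / 2) := fun x =>
    Real.exp_le_exp.2 (by nlinarith [sq_nonneg x])
  have zero : ∀ r a : ℝ, 0 ≤ r → r ≤ d → r⁻¹ * Real.exp (-a ^ 2) ≤
      d * (1 + 3 * D) * (r⁻¹ ^ 2 * Real.exp (-a ^ 2 / 2)) := by
    intro r a hr hrd
    rcases hr.eq_or_lt with h | h
    · simp [← h]
    · calc r⁻¹ * Real.exp (-a ^ 2) = r * 1 * (r⁻¹ ^ 2 * Real.exp (-a ^ 2)) := by field_simp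
        _ ≤ d * (1 + 3 * D) * (r⁻¹ ^ 2 * Real.exp (-a ^ 2 / 2)) := by
            have h1 : (1 : ℝ) ≤ 1 + 3 * D := by linarith
            have h2 := hhalf a
            gcongr
  rcases hr.eq_or_lt with h | h
  · subst h
    have := zero r' a' hr' (by simpa [abs_of_nonneg hr'] using hd)
    simpa [abs_of_nonneg hr'] using this
  rcases hr'.eq_or_lt with h' | h'
  · subst h'
    have := zero r a hr (by simpa [abs_of_nonneg hr] using hd)
    simpa [abs_of_nonneg hr] using this
  have main : ∀ r r' a a' : ℝ, 0 < r' → r' ≤ r → |r - r'| ≤ d → |a - a'| * r ≤ d * D →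
      |r⁻¹ * Real.exp (-a ^ 2) - r'⁻¹ * Real.exp (-a' ^ 2)| ≤
      d * (1 + 3 * D) *
        (r⁻¹ ^ 2 * Real.exp (-a ^ 2 / 2) + r'⁻¹ ^ 2 * Real.exp (-a' ^ 2 / 2)) := by
    intro r r' a a' h' hrr hd h1
    have h : 0 < r := h'.trans_le hrr
    have hinv : r⁻¹ ≤ r'⁻¹ := inv_anti₀ h' hrr
    have e1 : |(r⁻¹ - r'⁻¹) * Real.exp (-a' ^ 2)| ≤ d * (r'⁻¹ ^ 2 * Real.exp (-a' ^ 2 / 2)) := by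
      have : r⁻¹ - r'⁻¹ = -((r - r') * (r⁻¹ * r'⁻¹)) := by field_simp; ring
      rw [this, abs_mul, abs_neg, abs_mul, abs_of_pos (Real.exp_pos _),
        abs_of_pos (by positivity : 0 < r⁻¹ * r'⁻¹), mul_assoc]
      have h2 := hhalf a'
      calc |r - r'| * (r⁻¹ * r'⁻¹ * Real.exp (-a' ^ 2)) ≤
            d * (r'⁻¹ * r'⁻¹ * Real.exp (-a' ^ 2 / 2)) := by gcongr
        _ = _ := by ring
    have e2 : |r⁻¹ * (Real.exp (-a ^ 2) - Real.exp (-a' ^ 2))| ≤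
        d * (3 * D) *
          (r⁻¹ ^ 2 * Real.exp (-a ^ 2 / 2) + r'⁻¹ ^ 2 * Real.exp (-a' ^ 2 / 2)) := by
      rw [abs_mul, abs_of_pos (by positivity : 0 < r⁻¹)]
      have h3 : |a - a'| ≤ d * D * r⁻¹ := by
        rw [← div_eq_mul_inv, le_div_iff₀ h]; exact h1
      calc _ ≤ r⁻¹ * (3 * (d * D * r⁻¹) * (Real.exp (-a ^ 2 / 2) + Real.exp (-a' ^ 2 / 2))) := by
            gcongr
            exact (exp_sq_sub_le a a').trans (by gcongr)
        _ = d * (3 * D) *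
          (r⁻¹ ^ 2 * Real.exp (-a ^ 2 / 2) + r⁻¹ ^ 2 * Real.exp (-a' ^ 2 / 2)) := by ring
        _ ≤ _ := by gcongr
    have e3 : r⁻¹ * Real.exp (-a ^ 2) - r'⁻¹ * Real.exp (-a' ^ 2) =
      (r⁻¹ - r'⁻¹) * Real.exp (-a' ^ 2) + r⁻¹ * (Real.exp (-a ^ 2) - Real.exp (-a' ^ 2)) := by ring
    rw [e3]
    refine (abs_add_le _ _).trans ((add_le_add e1 e2).trans ?_)
    have : 0 ≤ d * (r⁻¹ ^ 2 * Real.exp (-a ^ 2 / 2)) := by positivity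
    nlinarith
  rcases le_total r' r with hle | hle
  · exact main r r' a a' h' hle hd (h1 h.ne' h'.ne')
  · have := main r' r a' a h hle (by rwa [abs_sub_comm])
      (by rw [abs_sub_comm]; exact h2 h.ne' h'.ne')
    rw [abs_sub_comm, add_comm (r⁻¹ ^ 2 * _)]
    exact this

lemma abs_inner_div_norm_le (w p : V) : |⟪w, p⟫_ℝ / ‖w‖| ≤ ‖p‖ := by
  rw [abs_div, abs_norm]
  exact div_le_of_le_mul₀ (norm_nonneg _) (norm_nonneg _)
    ((abs_real_inner_le_norm w p).trans_eq (mul_comm _ _))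

/-- The component `⟪w, p⟫ / ‖w‖` of `p` along `w` varies with `w` at rate `(‖p‖ + ‖w‖) / ‖w‖`. -/
lemma radial_comp_diff {w w' p p' : V} {d : ℝ} (hw : ‖w - w'‖ ≤ d) (hp : ‖p - p'‖ ≤ d)
    (h0 : ‖w‖ ≠ 0) (h0' : ‖w'‖ ≠ 0) :
    |⟪w, p⟫_ℝ / ‖w‖ - ⟪w', p'⟫_ℝ / ‖w'‖| * ‖w‖ ≤ d * (‖p‖ + ‖p'‖ + ‖w'‖) := by
  have e : (⟪w, p⟫_ℝ / ‖w‖ - ⟪w', p'⟫_ℝ / ‖w'‖) * ‖w‖ =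
      ⟪w - w', p⟫_ℝ + ⟪w', p - p'⟫_ℝ + ⟪w', p'⟫_ℝ / ‖w'‖ * (‖w'‖ - ‖w‖) := by
    rw [inner_sub_left, inner_sub_right]; field_simp; ring
  have h1 : |⟪w - w', p⟫_ℝ| ≤ d * ‖p‖ := (abs_real_inner_le_norm _ _).trans (by gcongr)
  have h2 : |⟪w', p - p'⟫_ℝ| ≤ ‖w'‖ * d := (abs_real_inner_le_norm _ _).trans (by gcongr)
  have h3 : |⟪w', p'⟫_ℝ / ‖w'‖ * (‖w'‖ - ‖w‖)| ≤ ‖p'‖ * d := by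
    rw [abs_mul]
    gcongr
    · exact abs_inner_div_norm_le w' p'
    · exact (abs_norm_sub_norm_le w' w).trans (by rwa [norm_sub_rev])
  calc _ = |(⟪w, p⟫_ℝ / ‖w‖ - ⟪w', p'⟫_ℝ / ‖w'‖) * ‖w‖| := by rw [abs_mul, abs_norm]
    _ ≤ d * ‖p‖ + ‖w'‖ * d + ‖p'‖ * d := by
      rw [e]; exact (abs_add_three _ _ _).trans (by gcongr)
    _ = _ := by ring

/-- The profile dominating both the kernel and its difference quotients: `‖y - x‖⁻²` times a
Gaussian in the component of `x` along `y - x`, plus a Gaussian in `x`. The singularity `‖y - x‖⁻²`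
is integrable in dimension three. -/
def qmaj (x y : V) : ℝ :=
  ‖y - x‖⁻¹ ^ 2 * Real.exp (-(⟪y - x, x⟫_ℝ / ‖y - x‖) ^ 2 / 2) + Real.exp (-‖x‖ ^ 2 / 4)

/-- The polynomial weight `1 + ‖x‖ + ‖y‖`. -/
def Sz (x y : V) : ℝ := 1 + ‖x‖ + ‖y‖

lemma one_le_Sz (x y : V) : 1 ≤ Sz x y := by
  unfold Sz; linarith [norm_nonneg x, norm_nonneg y]

lemma Sz_pos (x y : V) : 0 < Sz x y := one_pos.trans_le (one_le_Sz x y)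

lemma qmaj_nonneg (x y : V) : 0 ≤ qmaj x y := by unfold qmaj; positivity

lemma jap_sub_le (x y : V) : jap (x - y) ≤ Sz x y := by
  unfold jap Sz
  have h := norm_sub_le x y
  have h0 := norm_nonneg (x - y)
  rw [Real.sqrt_le_left (by positivity)]
  nlinarith [norm_nonneg x, norm_nonneg y]

/-- The weight `Sz` is comparable along increments of length at most `4`. -/
lemma Sz_le {x y x' y' : V} {d : ℝ} (hd : d ≤ 4) (hx : ‖x - x'‖ ≤ d) (hy : ‖y - y'‖ ≤ d) :
    Sz x' y' ≤ 9 * Sz x y := by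
  have h1 := norm_sub_norm_le x' x
  have h2 := norm_sub_norm_le y' y
  rw [norm_sub_rev] at h1 h2
  unfold Sz
  linarith [norm_nonneg x, norm_nonneg y]

/-- Increments of the singular part of the kernel of `K₁`. -/
lemma singular_diff {x y x' y' : V} {d : ℝ} (hd : d ≤ 4) (hx : ‖x - x'‖ ≤ d)
    (hy : ‖y - y'‖ ≤ d) :
    |‖y - x‖⁻¹ * Real.exp (-(⟪y - x, x⟫_ℝ ^ 2 / ‖y - x‖ ^ 2)) -
      ‖y' - x'‖⁻¹ * Real.exp (-(⟪y' - x', x'⟫_ℝ ^ 2 / ‖y' - x'‖ ^ 2))| ≤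
    1000 * d * (Sz x y * qmaj x y + Sz x' y' * qmaj x' y') := by
  have hd0 : 0 ≤ d := (norm_nonneg _).trans hx
  have hw : ‖(y - x) - (y' - x')‖ ≤ 2 * d := by
    have : (y - x) - (y' - x') = (y - y') - (x - x') := by abel
    rw [this]; exact (norm_sub_le _ _).trans (by linarith)
  have hx2 : ‖x - x'‖ ≤ 2 * d := by linarith
  set D := ‖x‖ + ‖x'‖ + ‖y - x‖ + ‖y' - x'‖ with hD
  have hn := norm_nonneg (y - x)
  have hn' := norm_nonneg (y' - x')
  have key := singular_core (r := ‖y - x‖) (r' := ‖y' - x'‖) (a := ⟪y - x, x⟫_ℝ / ‖y - x‖)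
    (a' := ⟪y' - x', x'⟫_ℝ / ‖y' - x'‖) (d := 2 * d) (D := D) (norm_nonneg _) (norm_nonneg _)
    ((abs_norm_sub_norm_le _ _).trans hw) (by positivity)
    (fun h h' => (radial_comp_diff hw hx2 h h').trans (by gcongr; linarith))
    (fun h h' => by
      rw [abs_sub_comm]
      refine (radial_comp_diff (d := 2 * d) (by rwa [norm_sub_rev])
        (by rwa [norm_sub_rev]) h' h).trans ?_
      gcongr; linarith)
  rw [← div_pow, ← div_pow]
  refine key.trans ?_
  have hS := Sz_le hd hx hy
  have hS' := Sz_le hd (by rwa [norm_sub_rev] : ‖x' - x‖ ≤ d) (by rwa [norm_sub_rev] : ‖y' - y‖ ≤ d)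
  have hDS : 1 + 3 * D ≤ 6 * (Sz x y + Sz x' y') := by
    have h1 := norm_sub_le y x
    have h2 := norm_sub_le y' x'
    simp only [hD, Sz]
    linarith [norm_nonneg x, norm_nonneg y, norm_nonneg x', norm_nonneg y']
  have q1 : ‖y - x‖⁻¹ ^ 2 * Real.exp (-(⟪y - x, x⟫_ℝ / ‖y - x‖) ^ 2 / 2) ≤ qmaj x y :=
    le_add_of_nonneg_right (Real.exp_pos _).le
  have q2 : ‖y' - x'‖⁻¹ ^ 2 * Real.exp (-(⟪y' - x', x'⟫_ℝ / ‖y' - x'‖) ^ 2 / 2) ≤ qmaj x' y' :=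
    le_add_of_nonneg_right (Real.exp_pos _).le
  have p1 := qmaj_nonneg x y
  have p2 := qmaj_nonneg x' y'
  have s1 := Sz_pos x y
  have s2 := Sz_pos x' y'
  calc _ ≤ 2 * d * (6 * (Sz x y + Sz x' y')) * (qmaj x y + qmaj x' y') := by gcongr
    _ = 12 * d * ((Sz x y + Sz x' y') * qmaj x y + (Sz x y + Sz x' y') * qmaj x' y') := by ring
    _ ≤ 12 * d * ((10 * Sz x y) * qmaj x y + (10 * Sz x' y') * qmaj x' y') := by
        gcongr <;> linarith
    _ ≤ _ := by
        have : 0 ≤ d * (Sz x y * qmaj x y + Sz x' y' * qmaj x' y') := by positivity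
        linarith

/-- Increments of the bounded part of the kernel of `K₁`. -/
lemma gauss_part_diff {x y x' y' : V} {d : ℝ} (hd : d ≤ 4) (hx : ‖x - x'‖ ≤ d)
    (hy : ‖y - y'‖ ≤ d) :
    |‖y - x‖ * Real.exp (-‖x‖ ^ 2) - ‖y' - x'‖ * Real.exp (-‖x'‖ ^ 2)| ≤
    1000 * d * (Sz x y * qmaj x y + Sz x' y' * qmaj x' y') := by
  have hd0 : 0 ≤ d := (norm_nonneg _).trans hx
  have hw : |‖y - x‖ - ‖y' - x'‖| ≤ 2 * d := by
    refine (abs_norm_sub_norm_le _ _).trans ?_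
    have : (y - x) - (y' - x') = (y - y') - (x - x') := by abel
    rw [this]; exact (norm_sub_le _ _).trans (by linarith)
  have hg := exp_sq_sub_le ‖x‖ ‖x'‖
  have hxx : |‖x‖ - ‖x'‖| ≤ d := (abs_norm_sub_norm_le _ _).trans hx
  have hS := Sz_le hd hx hy
  have hS' := Sz_le hd (by rwa [norm_sub_rev] : ‖x' - x‖ ≤ d) (by rwa [norm_sub_rev] : ‖y' - y‖ ≤ d)
  have q0 : ∀ x y : V, Real.exp (-‖x‖ ^ 2 / 2) ≤ qmaj x y := fun x y => by
    refine le_trans (Real.exp_le_exp.2 ?_) (le_add_of_nonneg_left (by positivity))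
    nlinarith [sq_nonneg ‖x‖]
  have q1 : Real.exp (-‖x‖ ^ 2) ≤ qmaj x y :=
    (Real.exp_le_exp.2 (by nlinarith [sq_nonneg ‖x‖])).trans (q0 x y)
  have hyx : ‖y' - x'‖ ≤ Sz x' y' := by
    have := norm_sub_le y' x'
    unfold Sz; linarith
  have e : ‖y - x‖ * Real.exp (-‖x‖ ^ 2) - ‖y' - x'‖ * Real.exp (-‖x'‖ ^ 2) =
    (‖y - x‖ - ‖y' - x'‖) * Real.exp (-‖x‖ ^ 2) +
      ‖y' - x'‖ * (Real.exp (-‖x‖ ^ 2) - Real.exp (-‖x'‖ ^ 2)) := by ring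
  have p1 := qmaj_nonneg x y
  have p2 := qmaj_nonneg x' y'
  have s1 := one_le_Sz x y
  have s2 := one_le_Sz x' y'
  have s2' := Sz_pos x' y'
  have s1' := Sz_pos x y
  rw [e]
  refine (abs_add_le _ _).trans ?_
  rw [abs_mul, abs_mul, abs_norm, abs_of_pos (Real.exp_pos _)]
  calc _ ≤ (2 * d) * qmaj x y + Sz x' y' * (3 * d * (qmaj x y + qmaj x' y')) := by
        gcongr
        refine hg.trans ?_
        gcongr
        · exact q0 x y
        · exact q0 x' y'
    _ = d * (2 * (1 * qmaj x y) + 3 * (Sz x' y' * qmaj x y) + 3 * (Sz x' y' * qmaj x' y')) := by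
        ring
    _ ≤ d * (2 * (Sz x y * qmaj x y) + 3 * (9 * Sz x y * qmaj x y) +
          3 * (Sz x' y' * qmaj x' y')) := by gcongr
    _ ≤ _ := by
        have h1 : 0 ≤ d * (Sz x y * qmaj x y) := by positivity
        have h2 : 0 ≤ d * (Sz x' y' * qmaj x' y') := by positivity
        linarith

/-! ### Bounds for the kernel of `K` -/

/-- Increments of `r₀`, by the mean value inequality in each variable separately. -/
lemma r0_diff {r₀ : V → V → ℝ} (hr_C1 : ContDiff ℝ 1 (Function.uncurry r₀)) {C₂ : ℝ}
    (hC₂ : 0 < C₂) (hr_db : R0DerivBounds r₀ C₂) {x y x' y' : V} {d : ℝ} (hd : d ≤ 4)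
    (hx : ‖x - x'‖ ≤ d) (hy : ‖y - y'‖ ≤ d) :
    |r₀ x y - r₀ x' y'| ≤
      (C₂ * Real.exp 8 * 9 + C₂) * d * (Sz x y * qmaj x y + Sz x' y' * qmaj x' y') := by
  have hd0 : 0 ≤ d := (norm_nonneg _).trans hx
  have p1 := qmaj_nonneg x y
  have p2 := qmaj_nonneg x' y'
  have s1 := one_le_Sz x y
  have s2 := one_le_Sz x' y'
  have s2' := Sz_pos x' y'
  have s1' := Sz_pos x y
  have h1 : |r₀ x y - r₀ x' y| ≤ C₂ * Real.exp 8 * 9 * d * (Sz x y * qmaj x y) := by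
    have hdiff : Differentiable ℝ (fun u => r₀ u y) :=
      (hr_C1.comp (by fun_prop : ContDiff ℝ 1 fun u : V => (u, y))).differentiable (by norm_num)
    have hb : ∀ s ∈ Metric.closedBall x d, ‖fderiv ℝ (fun u => r₀ u y) s‖ ≤
        C₂ * Real.exp 8 * 9 * (Sz x y * qmaj x y) := by
      intro s hs
      have hs' : ‖x - s‖ ≤ d := by rw [← dist_eq_norm, dist_comm]; exact hs
      refine (hr_db s y).2.1.trans ?_
      have e1 : jap (s - y) ≤ 9 * Sz x y :=
        (jap_sub_le s y).trans (Sz_le hd hs' (by simpa using hd0))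
      have e2 : Real.exp (-‖s‖ ^ 2 / 2) ≤ Real.exp 8 * qmaj x y := by
        have : Real.exp (-‖s‖ ^ 2 / 2) ≤ Real.exp 8 * Real.exp (-‖x‖ ^ 2 / 4) := by
          rw [← Real.exp_add]
          refine Real.exp_le_exp.2 ?_
          have h3 := norm_sub_norm_le x s
          have h4 : ‖x‖ ≤ ‖s‖ + 4 := by linarith
          nlinarith [norm_nonneg x, norm_nonneg s, sq_nonneg (‖s‖ - 4)]
        refine this.trans ?_
        gcongr
        exact le_add_of_nonneg_left (by positivity)
      have e3 : 0 ≤ jap (s - y) := Real.sqrt_nonneg _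
      calc _ ≤ C₂ * ((Real.exp 8 * qmaj x y) * (9 * Sz x y)) := by gcongr
        _ = _ := by ring
    have := (convex_closedBall x d).norm_image_sub_le_of_norm_fderiv_le (𝕜 := ℝ)
      (fun s _ => hdiff s) hb
      (show x' ∈ Metric.closedBall x d by rw [mem_closedBall_iff_norm']; exact hx)
      (Metric.mem_closedBall_self hd0)
    rw [Real.norm_eq_abs] at this
    refine this.trans ?_
    calc _ ≤ C₂ * Real.exp 8 * 9 * (Sz x y * qmaj x y) * d := by gcongr
      _ = _ := by ring
  have h2 : |r₀ x' y - r₀ x' y'| ≤ C₂ * d * (Sz x' y' * qmaj x' y') := by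
    have hdiff : Differentiable ℝ (fun v => r₀ x' v) :=
      (hr_C1.comp (by fun_prop : ContDiff ℝ 1 fun u : V => (x', u))).differentiable (by norm_num)
    have := (convex_univ).norm_image_sub_le_of_norm_fderiv_le (𝕜 := ℝ)
      (fun s _ => hdiff s) (fun s _ => (hr_db x' s).2.2) (Set.mem_univ y') (Set.mem_univ y)
    rw [Real.norm_eq_abs] at this
    refine this.trans ?_
    have e2 : Real.exp (-‖x'‖ ^ 2 / 2) ≤ 1 * qmaj x' y' := by
      rw [one_mul]
      refine le_trans (Real.exp_le_exp.2 ?_) (le_add_of_nonneg_left (by positivity))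
      nlinarith [sq_nonneg ‖x'‖]
    calc _ ≤ C₂ * (Sz x' y' * qmaj x' y') * d := by
          gcongr
          exact e2.trans (by gcongr)
      _ = _ := by ring
  refine (abs_sub_le _ (r₀ x' y) _).trans ((add_le_add h1 h2).trans ?_)
  have h3 : 0 ≤ C₂ * Real.exp 8 * 9 * d * (Sz x' y' * qmaj x' y') := by positivity
  have h4 : 0 ≤ C₂ * d * (Sz x y * qmaj x y) := by positivity
  linarith

/-- The kernel and its increments of length at most `4`, singularity included, are dominated by
`Sz * qmaj`. -/
lemma Kker_bounds (r₀ : V → V → ℝ)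
    (hr_nonneg : ∀ u v : V, 0 ≤ r₀ u v)
    (hr_C1 : ContDiff ℝ 1 (Function.uncurry r₀))
    (C : ℝ) (hC : 0 < C) (hr_bd : R0Bounds r₀ C)
    (C₂ : ℝ) (hC₂ : 0 < C₂) (hr_db : R0DerivBounds r₀ C₂)
    (Ci κ : ℝ) (hCi : 0 < Ci) (hκ : 0 < κ) :
    ∃ M > 0, (∀ x y : V, |Kker r₀ Ci κ x y| ≤ M * (Sz x y * qmaj x y)) ∧
      ∀ (x y x' y' : V) (d : ℝ), d ≤ 4 → ‖x - x'‖ ≤ d → ‖y - y'‖ ≤ d →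
        |Kker r₀ Ci κ x y - Kker r₀ Ci κ x' y'| ≤
          M * d * (Sz x y * qmaj x y + Sz x' y' * qmaj x' y') := by
  have hpi := Real.pi_pos
  refine ⟨(C + Ci * κ * (2 * π + π)) + ((C₂ * Real.exp 8 * 9 + C₂) +
    Ci * κ * (2 * π * 1000 + π * 1000)), by positivity, ?_, ?_⟩
  · intro x y
    have p1 := qmaj_nonneg x y
    have s1 := Sz_pos x y
    have hyx : ‖y - x‖ ≤ Sz x y := by
      have := norm_sub_le y x
      unfold Sz; linarith
    have q1 : Real.exp (-‖x‖ ^ 2) ≤ qmaj x y := by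
      refine le_trans (Real.exp_le_exp.2 ?_) (le_add_of_nonneg_left (by positivity))
      nlinarith [sq_nonneg ‖x‖]
    have a1 : |r₀ x y| ≤ C * (Sz x y * qmaj x y) := by
      rw [abs_of_nonneg (hr_nonneg x y)]
      refine (hr_bd x y).2.trans ?_
      have e3 : 0 ≤ jap (x - y) := Real.sqrt_nonneg _
      calc _ ≤ C * (qmaj x y * Sz x y) := by gcongr; exact jap_sub_le x y
        _ = _ := by ring
    have a2 : |‖y - x‖⁻¹ * Real.exp (-(⟪y - x, x⟫_ℝ ^ 2 / ‖y - x‖ ^ 2))| ≤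
        Sz x y * qmaj x y := by
      rw [abs_of_nonneg (by positivity), ← div_pow]
      have h1 : ‖y - x‖⁻¹ ≤ Sz x y * ‖y - x‖⁻¹ ^ 2 := by
        rcases eq_or_ne ‖y - x‖ 0 with h | h
        · simp [h]
        · calc ‖y - x‖⁻¹ = ‖y - x‖ * ‖y - x‖⁻¹ ^ 2 := by field_simp
            _ ≤ _ := by gcongr
      have h2 : Real.exp (-(⟪y - x, x⟫_ℝ / ‖y - x‖) ^ 2) ≤
          Real.exp (-(⟪y - x, x⟫_ℝ / ‖y - x‖) ^ 2 / 2) :=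
        Real.exp_le_exp.2 (by nlinarith [sq_nonneg (⟪y - x, x⟫_ℝ / ‖y - x‖)])
      calc _ ≤ Sz x y * ‖y - x‖⁻¹ ^ 2 * Real.exp (-(⟪y - x, x⟫_ℝ / ‖y - x‖) ^ 2 / 2) := by
            gcongr
        _ ≤ _ := by
            rw [mul_assoc]; gcongr
            exact le_add_of_nonneg_right (Real.exp_pos _).le
    have a3 : |‖y - x‖ * Real.exp (-‖x‖ ^ 2)| ≤ Sz x y * qmaj x y := by
      rw [abs_of_nonneg (by positivity)]; gcongr
    have hP : 0 ≤ Sz x y * qmaj x y := by positivity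
    unfold Kker
    rw [abs_le] at *
    have g1 := mul_le_mul_of_nonneg_left a2.1 (by positivity : 0 ≤ Ci * κ * (2 * π))
    have g2 := mul_le_mul_of_nonneg_left a2.2 (by positivity : 0 ≤ Ci * κ * (2 * π))
    have g3 := mul_le_mul_of_nonneg_left a3.1 (by positivity : 0 ≤ Ci * κ * π)
    have g4 := mul_le_mul_of_nonneg_left a3.2 (by positivity : 0 ≤ Ci * κ * π)
    have g5 : 0 ≤ ((C₂ * Real.exp 8 * 9 + C₂) +
      Ci * κ * (2 * π * 1000 + π * 1000)) * (Sz x y * qmaj x y) := by positivity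
    constructor <;> linarith
  · intro x y x' y' d hd hx hy
    have hd0 : 0 ≤ d := (norm_nonneg _).trans hx
    have a1 := r0_diff hr_C1 hC₂ hr_db hd hx hy
    have a2 := singular_diff hd hx hy
    have a3 := gauss_part_diff hd hx hy
    have p1 := qmaj_nonneg x y
    have p2 := qmaj_nonneg x' y'
    have s1' := Sz_pos x y
    have s2' := Sz_pos x' y'
    unfold Kker
    set P := Sz x y * qmaj x y + Sz x' y' * qmaj x' y' with hP
    have hP0 : 0 ≤ P := by positivity
    rw [abs_le] at *
    have g1 := mul_le_mul_of_nonneg_left a2.1 (by positivity : 0 ≤ Ci * κ * (2 * π))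
    have g2 := mul_le_mul_of_nonneg_left a2.2 (by positivity : 0 ≤ Ci * κ * (2 * π))
    have g3 := mul_le_mul_of_nonneg_left a3.1 (by positivity : 0 ≤ Ci * κ * π)
    have g4 := mul_le_mul_of_nonneg_left a3.2 (by positivity : 0 ≤ Ci * κ * π)
    have g5 : 0 ≤ (C + Ci * κ * (2 * π + π)) * d * P := by positivity
    constructor <;> linarith

/-! ### Moments of the majorant -/

open scoped ENNReal

instance : IsFiniteMeasure σS := by unfold σS; infer_instance

/-- Polar coordinates in `ℝ³`. -/
lemma lintegral_polar {F : V → ℝ≥0∞} (hF : Measurable F) :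
    ∫⁻ w, F w =
      ∫⁻ ω : S2, (∫⁻ r in Set.Ioi (0 : ℝ), ENNReal.ofReal (r ^ 2) * F (r • (ω : V))) ∂σS := by
  have hdim : Module.finrank ℝ V - 1 = 2 := by simp
  have mp := (volume : Measure V).measurePreserving_homeomorphUnitSphereProd
  rw [hdim] at mp
  have hG : Measurable fun p : S2 × Set.Ioi (0 : ℝ) => F ((p.2 : ℝ) • (p.1 : V)) :=
    hF.comp (by fun_prop)
  have h1 : ∫⁻ w, F w = ∫⁻ w in ({0}ᶜ : Set V), F w := by
    rw [restrict_compl_singleton]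
  have h2 : ∫⁻ w in ({0}ᶜ : Set V), F w =
      ∫⁻ w : ({0}ᶜ : Set V), F w ∂(volume.comap ((↑) : ({0}ᶜ : Set V) → V)) :=
    (lintegral_subtype_comap (measurableSet_singleton (0 : V)).compl F).symm
  have h3 := mp.lintegral_comp hG
  have h4 : ∀ w : ({0}ᶜ : Set V), F ((((homeomorphUnitSphereProd V) w).2 : ℝ) •
      (((homeomorphUnitSphereProd V) w).1 : V)) = F w := by
    intro w
    have hw : ‖(w : V)‖ ≠ 0 := norm_ne_zero_iff.2 w.2
    simp [homeomorphUnitSphereProd, smul_smul, hw]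
  simp_rw [h4] at h3
  rw [h1, h2, h3, lintegral_prod _ hG.aemeasurable]
  refine lintegral_congr fun ω => ?_
  have hm : Measurable fun r : Set.Ioi (0 : ℝ) => ENNReal.ofReal ((r : ℝ) ^ 2) := by fun_prop
  have hm2 : Measurable fun r : Set.Ioi (0 : ℝ) => F ((r : ℝ) • (ω : V)) := hF.comp (by fun_prop)
  rw [Measure.volumeIoiPow, lintegral_withDensity_eq_lintegral_mul _ hm hm2,
    ← lintegral_subtype_comap measurableSet_Ioi]
  rfl

lemma poly_gauss_le (k : ℕ) {y : ℝ} (hy : 0 ≤ y) :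
    (1 + y) ^ k * Real.exp (-y ^ 2 / 4) ≤ Real.exp (2 * k ^ 2) * Real.exp (-(1 / 8) * y ^ 2) := by
  have h1 : (1 + y) ^ k ≤ Real.exp (k * y) := by
    rw [Real.exp_nat_mul]
    gcongr
    linarith [Real.add_one_le_exp y]
  calc _ ≤ Real.exp (k * y) * Real.exp (-y ^ 2 / 4) := by gcongr
    _ ≤ _ := by
      rw [← Real.exp_add, ← Real.exp_add]
      refine Real.exp_le_exp.2 ?_
      nlinarith [sq_nonneg (4 * (k : ℝ) - y)]

lemma gauss1_moment (k : ℕ) :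
    ∫⁻ x : ℝ, ENNReal.ofReal ((1 + |x|) ^ k * Real.exp (-x ^ 2 / 2)) < ∞ := by
  have hi : Integrable fun x : ℝ => Real.exp (2 * k ^ 2) * Real.exp (-(1 / 8) * x ^ 2) :=
    (integrable_exp_neg_mul_sq (by norm_num)).const_mul _
  refine lt_of_le_of_lt (lintegral_mono fun x => ENNReal.ofReal_le_ofReal ?_)
    hi.lintegral_lt_top
  have := poly_gauss_le k (abs_nonneg x)
  rw [sq_abs] at this
  refine le_trans ?_ this
  gcongr (1 + |x|) ^ k * Real.exp ?_
  nlinarith [sq_nonneg x]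

lemma gauss3_integrable (k : ℕ) :
    Integrable fun x : V => (1 + ‖x‖) ^ k * Real.exp (-‖x‖ ^ 2 / 4) := by
  have h0 : Integrable fun x : V => Real.exp (-(1 / 8) * ‖x‖ ^ 2) := by
    have := (GaussianFourier.integrable_cexp_neg_mul_sq_norm_add (V := V) (b := (1 / 8 : ℂ))
      (by norm_num) 0 0).norm
    refine this.congr (Eventually.of_forall fun x => ?_)
    simp [Complex.norm_exp]
    norm_cast
  refine (h0.const_mul (Real.exp (2 * k ^ 2))).mono' (by fun_prop) (Eventually.of_forall fun x => ?_)
  rw [Real.norm_of_nonneg (by positivity)]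
  exact poly_gauss_le k (norm_nonneg x)

lemma gauss3_moment (k : ℕ) :
    ∫⁻ x : V, ENNReal.ofReal ((1 + ‖x‖) ^ k * Real.exp (-‖x‖ ^ 2 / 4)) < ∞ :=
  (gauss3_integrable k).lintegral_lt_top

/-- One-dimensional moment along a ray: translating by `c` with `|c| ≤ R` costs only a power of
`1 + R`. -/
lemma radial_moment (k : ℕ) {R c : ℝ} (hc : |c| ≤ R) :
    ∫⁻ r in Set.Ioi (0 : ℝ), ENNReal.ofReal ((1 + 2 * R + r) ^ k * Real.exp (-(c - r) ^ 2 / 2)) ≤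
      ENNReal.ofReal ((3 * (1 + R)) ^ k) *
        ∫⁻ x : ℝ, ENNReal.ofReal ((1 + |x|) ^ k * Real.exp (-x ^ 2 / 2)) := by
  have hR : 0 ≤ R := (abs_nonneg c).trans hc
  calc _ ≤ ∫⁻ r in Set.Ioi (0 : ℝ), ENNReal.ofReal ((3 * (1 + R)) ^ k) *
        ENNReal.ofReal ((1 + |r - c|) ^ k * Real.exp (-(r - c) ^ 2 / 2)) := by
        refine setLIntegral_mono' measurableSet_Ioi fun r hr => ?_
        rw [← ENNReal.ofReal_mul (by positivity), ← mul_assoc, ← mul_pow]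
        have hr0 : (0 : ℝ) < r := hr
        have e : (c - r) ^ 2 = (r - c) ^ 2 := by ring
        rw [e]
        refine ENNReal.ofReal_le_ofReal ?_
        gcongr
        have := le_abs_self (r - c)
        have := le_abs_self c
        nlinarith [abs_nonneg (r - c)]
    _ ≤ ∫⁻ r : ℝ, ENNReal.ofReal ((3 * (1 + R)) ^ k) *
        ENNReal.ofReal ((1 + |r - c|) ^ k * Real.exp (-(r - c) ^ 2 / 2)) :=
        setLIntegral_le_lintegral _ _
    _ = _ := by
        rw [lintegral_const_mul _ (by fun_prop)]
        congr 1
        exact lintegral_sub_right_eq_self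
          (fun x : ℝ => ENNReal.ofReal ((1 + |x|) ^ k * Real.exp (-x ^ 2 / 2))) c

/-- In polar coordinates centred at `y` the Jacobian `r²` cancels the factor `‖y - x‖⁻²`, and on the
ray `x = y - rω` the Gaussian is `exp (-(⟪ω, y⟫ - r)² / 2)`, a translate in `r` of a fixed one. -/
lemma singular_moment (k : ℕ) : ∃ M : ℝ, 0 ≤ M ∧ ∀ y : V,
    ∫⁻ x : V, ENNReal.ofReal (Sz x y ^ k *
      (‖y - x‖⁻¹ ^ 2 * Real.exp (-(⟪y - x, x⟫_ℝ / ‖y - x‖) ^ 2 / 2))) ≤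
      ENNReal.ofReal (M * (1 + ‖y‖) ^ k) := by
  set I := ∫⁻ x : ℝ, ENNReal.ofReal ((1 + |x|) ^ k * Real.exp (-x ^ 2 / 2)) with hI
  have hIfin : I < ∞ := gauss1_moment k
  refine ⟨3 ^ k * I.toReal * (σS Set.univ).toReal, by positivity, fun y => ?_⟩
  set G : V → ℝ≥0∞ := fun x => ENNReal.ofReal (Sz x y ^ k *
      (‖y - x‖⁻¹ ^ 2 * Real.exp (-(⟪y - x, x⟫_ℝ / ‖y - x‖) ^ 2 / 2))) with hG
  have hGm : Measurable G := by
    simp only [hG, Sz]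
    fun_prop
  rw [← lintegral_sub_left_eq_self G y, lintegral_polar (by fun_prop)]
  have hb : ∀ ω : S2, ∫⁻ r in Set.Ioi (0 : ℝ), ENNReal.ofReal (r ^ 2) * G (y - r • (ω : V)) ≤
      ENNReal.ofReal ((3 * (1 + ‖y‖)) ^ k) * I := by
    intro ω
    have hω : ‖(ω : V)‖ = 1 := by simp
    have hc : |⟪(ω : V), y⟫_ℝ| ≤ ‖y‖ := by
      simpa [hω] using abs_real_inner_le_norm (ω : V) y
    refine le_trans (setLIntegral_mono' measurableSet_Ioi fun r hr => ?_) (radial_moment k hc)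
    have hr0 : (0 : ℝ) < r := hr
    simp only [hG]
    rw [← ENNReal.ofReal_mul (by positivity)]
    refine ENNReal.ofReal_le_ofReal ?_
    have e1 : y - (y - r • (ω : V)) = r • (ω : V) := by abel
    have e2 : ‖r • (ω : V)‖ = r := by rw [norm_smul, hω, Real.norm_of_nonneg hr0.le, mul_one]
    have e3 : ⟪r • (ω : V), y - r • (ω : V)⟫_ℝ / r = ⟪(ω : V), y⟫_ℝ - r := by
      rw [inner_sub_right, real_inner_self_eq_norm_sq, e2, real_inner_smul_left]
      field_simp
    rw [e1, e2, e3]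
    have hS : Sz (y - r • (ω : V)) y ≤ 1 + 2 * ‖y‖ + r := by
      have := norm_sub_le y (r • (ω : V))
      rw [e2] at this
      unfold Sz; linarith
    have hS0 := Sz_pos (y - r • (ω : V)) y
    calc _ = Sz (y - r • (ω : V)) y ^ k * Real.exp (-(⟪(ω : V), y⟫_ℝ - r) ^ 2 / 2) := by
          field_simp
      _ ≤ _ := by gcongr
  refine (lintegral_mono hb).trans ?_
  rw [lintegral_const, mul_pow]
  nth_rw 1 [← ENNReal.ofReal_toReal hIfin.ne]
  rw [← ENNReal.ofReal_toReal (measure_ne_top σS Set.univ), ← ENNReal.ofReal_mul (by positivity),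
    ← ENNReal.ofReal_mul (by positivity)]
  refine ENNReal.ofReal_le_ofReal (le_of_eq ?_)
  rw [ENNReal.toReal_ofReal ENNReal.toReal_nonneg]
  ring

/-- Moments of the majorant in its first variable grow no faster than those of the weight. -/
lemma qmaj_moment (k : ℕ) : ∃ M : ℝ, 0 < M ∧ ∀ y : V,
    ∫⁻ x : V, ENNReal.ofReal (Sz x y ^ k * qmaj x y) ≤ ENNReal.ofReal (M * (1 + ‖y‖) ^ k) := by
  obtain ⟨M, hM, h⟩ := singular_moment k
  set J := ∫⁻ x : V, ENNReal.ofReal ((1 + ‖x‖) ^ k * Real.exp (-‖x‖ ^ 2 / 4)) with hJ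
  have hJfin : J < ∞ := gauss3_moment k
  refine ⟨M + J.toReal + 1, by positivity, fun y => ?_⟩
  have hg : ∫⁻ x : V, ENNReal.ofReal (Sz x y ^ k * Real.exp (-‖x‖ ^ 2 / 4)) ≤
      ENNReal.ofReal (J.toReal * (1 + ‖y‖) ^ k) := by
    calc _ ≤ ∫⁻ x : V, ENNReal.ofReal ((1 + ‖y‖) ^ k) *
          ENNReal.ofReal ((1 + ‖x‖) ^ k * Real.exp (-‖x‖ ^ 2 / 4)) := by
          refine lintegral_mono fun x => ?_
          rw [← ENNReal.ofReal_mul (by positivity), ← mul_assoc, ← mul_pow]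
          refine ENNReal.ofReal_le_ofReal ?_
          have hS0 := Sz_pos x y
          gcongr
          unfold Sz
          nlinarith [norm_nonneg x, norm_nonneg y]
      _ = _ := by
          rw [lintegral_const_mul _ (by fun_prop), mul_comm J.toReal,
            ENNReal.ofReal_mul (by positivity), ENNReal.ofReal_toReal hJfin.ne]
  have hm : Measurable fun x : V => ENNReal.ofReal (Sz x y ^ k * Real.exp (-‖x‖ ^ 2 / 4)) := by
    simp only [Sz]; fun_prop
  calc _ = ∫⁻ x : V, (ENNReal.ofReal (Sz x y ^ k *
      (‖y - x‖⁻¹ ^ 2 * Real.exp (-(⟪y - x, x⟫_ℝ / ‖y - x‖) ^ 2 / 2))) +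
      ENNReal.ofReal (Sz x y ^ k * Real.exp (-‖x‖ ^ 2 / 4))) := by
        refine lintegral_congr fun x => ?_
        have hS0 := Sz_pos x y
        rw [← ENNReal.ofReal_add (by positivity) (by positivity), ← mul_add]
        rfl
    _ ≤ ENNReal.ofReal (M * (1 + ‖y‖) ^ k) + ENNReal.ofReal (J.toReal * (1 + ‖y‖) ^ k) := by
        rw [lintegral_add_right _ hm]
        exact add_le_add (h y) hg
    _ ≤ _ := by
        rw [← ENNReal.ofReal_add (by positivity) (by positivity)]
        refine ENNReal.ofReal_le_ofReal ?_
        have : 0 ≤ (1 + ‖y‖) ^ k := by positivity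
        nlinarith

/-! ### The collision frequency -/

/-- `ν₀` is bounded below by a positive constant and is Lipschitz. -/
lemma nu0_props (r₀ : V → V → ℝ)
    (hr_C1 : ContDiff ℝ 1 (Function.uncurry r₀))
    (C : ℝ) (hC : 0 < C) (hr_bd : R0Bounds r₀ C) (hr_nonneg : ∀ u v : V, 0 ≤ r₀ u v)
    (C₂ : ℝ) (hr_db : R0DerivBounds r₀ C₂) :
    ∃ m > 0, (∀ z, m ≤ nu0 r₀ z) ∧
      ∃ L : ℝ, ∀ z z', |nu0 r₀ z - nu0 r₀ z'| ≤ L * ‖z - z'‖ := by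
  have hKint : ∀ z, Integrable fun u => r₀ u z := by
    intro z
    have hc : Continuous fun u => r₀ u z :=
      hr_C1.continuous.comp (by fun_prop : Continuous fun u : V => (u, z))
    refine ((gauss3_integrable 1).const_mul (C * (1 + ‖z‖))).mono' hc.aestronglyMeasurable
      (Eventually.of_forall fun u => ?_)
    rw [Real.norm_of_nonneg (hr_nonneg u z)]
    refine (hr_bd u z).2.trans ?_
    have h1 : Real.exp (-‖u‖ ^ 2) ≤ Real.exp (-‖u‖ ^ 2 / 4) :=
      Real.exp_le_exp.2 (by nlinarith [sq_nonneg ‖u‖])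
    have h2 : jap (u - z) ≤ (1 + ‖z‖) * (1 + ‖u‖) := by
      refine (jap_sub_le u z).trans ?_
      unfold Sz
      nlinarith [norm_nonneg u, norm_nonneg z]
    have h3 : 0 ≤ jap (u - z) := Real.sqrt_nonneg _
    calc _ ≤ C * (Real.exp (-‖u‖ ^ 2 / 4) * ((1 + ‖z‖) * (1 + ‖u‖))) := by gcongr
      _ = _ := by ring
  have hg : Integrable fun u : V => Real.exp (-‖u‖ ^ 2) := by
    refine (gauss3_integrable 0).mono' (by fun_prop) (Eventually.of_forall fun u => ?_)
    rw [Real.norm_of_nonneg (by positivity), pow_zero, one_mul]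
    exact Real.exp_le_exp.2 (by nlinarith [sq_nonneg ‖u‖])
  have hg2 : Integrable fun u : V => Real.exp (-‖u‖ ^ 2 / 2) := by
    refine (gauss3_integrable 0).mono' (by fun_prop) (Eventually.of_forall fun u => ?_)
    rw [Real.norm_of_nonneg (by positivity), pow_zero, one_mul]
    exact Real.exp_le_exp.2 (by nlinarith [sq_nonneg ‖u‖])
  refine ⟨∫ u : V, C⁻¹ * Real.exp (-‖u‖ ^ 2), ?_, ?_, ∫ u : V, C₂ * Real.exp (-‖u‖ ^ 2 / 2), ?_⟩
  · rw [integral_const_mul]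
    exact mul_pos (inv_pos.2 hC) (integral_exp_pos hg)
  · intro z
    refine integral_mono (hg.const_mul _) (hKint z) fun u => ?_
    refine le_trans ?_ (hr_bd u z).1
    have : 1 ≤ jap (u - z) := by
      unfold jap
      rw [Real.one_le_sqrt]
      nlinarith [sq_nonneg ‖u - z‖]
    have h0 := Real.exp_pos (-‖u‖ ^ 2)
    have : Real.exp (-‖u‖ ^ 2) ≤ Real.exp (-‖u‖ ^ 2) * jap (u - z) := by nlinarith
    exact mul_le_mul_of_nonneg_left this (inv_pos.2 hC).le
  · intro z z'
    unfold nu0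
    rw [← integral_sub (hKint z) (hKint z'), ← Real.norm_eq_abs, ← integral_mul_const]
    refine norm_integral_le_of_norm_le ((hg2.const_mul C₂).mul_const _)
      (Eventually.of_forall fun u => ?_)
    have hdiff : Differentiable ℝ (fun v => r₀ u v) :=
      (hr_C1.comp (by fun_prop : ContDiff ℝ 1 fun v : V => (u, v))).differentiable (by norm_num)
    exact (convex_univ).norm_image_sub_le_of_norm_fderiv_le (𝕜 := ℝ)
      (fun s _ => hdiff s) (fun s _ => (hr_db u s).2.2) (Set.mem_univ z') (Set.mem_univ z)

/-- `ν₁` is nonnegative and Lipschitz. -/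
lemma nu1_props : (∀ z, 0 ≤ nu1 z) ∧ ∃ L : ℝ, ∀ z z', |nu1 z - nu1 z'| ≤ L * ‖z - z'‖ := by
  have hω : ∀ ω : S2, ‖(ω : V)‖ = 1 := fun ω => by simp
  have hin : ∀ u z : V, Integrable (fun ω : S2 => |⟪u - z, (ω : V)⟫_ℝ| * Real.exp (-‖u‖ ^ 2)) σS := by
    intro u z
    refine Integrable.of_bound (by fun_prop) (‖u - z‖ * Real.exp (-‖u‖ ^ 2))
      (Eventually.of_forall fun ω => ?_)
    rw [Real.norm_of_nonneg (by positivity)]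
    gcongr
    simpa [hω] using abs_real_inner_le_norm (u - z) (ω : V)
  have hg : Integrable fun u : V => (1 + ‖u‖) * Real.exp (-‖u‖ ^ 2) := by
    refine (gauss3_integrable 1).mono' (by fun_prop) (Eventually.of_forall fun u => ?_)
    rw [Real.norm_of_nonneg (by positivity), pow_one]
    gcongr (1 + ‖u‖) * Real.exp ?_
    nlinarith [sq_nonneg ‖u‖]
  have hg0 : Integrable fun u : V => Real.exp (-‖u‖ ^ 2) := by
    refine hg.mono' (by fun_prop) (Eventually.of_forall fun u => ?_)
    rw [Real.norm_of_nonneg (by positivity)]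
    exact le_mul_of_one_le_left (Real.exp_pos _).le (by linarith [norm_nonneg u])
  set s := σS.real Set.univ with hs
  have hs0 : 0 ≤ s := by positivity
  have hKint : ∀ z : V, Integrable fun u : V =>
      ∫ ω : S2, |⟪u - z, (ω : V)⟫_ℝ| * Real.exp (-‖u‖ ^ 2) ∂σS := by
    intro z
    have hm : StronglyMeasurable fun u : V =>
        ∫ ω : S2, |⟪u - z, (ω : V)⟫_ℝ| * Real.exp (-‖u‖ ^ 2) ∂σS := by
      refine StronglyMeasurable.integral_prod_right (f := fun u : V => fun ω : S2 =>
        |⟪u - z, (ω : V)⟫_ℝ| * Real.exp (-‖u‖ ^ 2)) ?_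
      refine Continuous.stronglyMeasurable ?_
      unfold Function.uncurry
      fun_prop
    refine (hg.const_mul ((1 + ‖z‖) * s)).mono' hm.aestronglyMeasurable
      (Eventually.of_forall fun u => ?_)
    refine (norm_integral_le_of_norm_le_const
      (C := ‖u - z‖ * Real.exp (-‖u‖ ^ 2)) (Eventually.of_forall fun ω => ?_)).trans ?_
    · rw [Real.norm_of_nonneg (by positivity)]
      gcongr
      simpa [hω] using abs_real_inner_le_norm (u - z) (ω : V)
    · have : ‖u - z‖ ≤ (1 + ‖z‖) * (1 + ‖u‖) := by
        have := norm_sub_le u z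
        nlinarith [norm_nonneg u, norm_nonneg z]
      calc _ ≤ ((1 + ‖z‖) * (1 + ‖u‖)) * Real.exp (-‖u‖ ^ 2) * s := by gcongr
        _ = _ := by ring
  refine ⟨fun z => integral_nonneg fun u => integral_nonneg fun ω => by positivity,
    ∫ u : V, s * Real.exp (-‖u‖ ^ 2), fun z z' => ?_⟩
  unfold nu1
  rw [← integral_sub (hKint z) (hKint z'), ← Real.norm_eq_abs, ← integral_mul_const]
  refine norm_integral_le_of_norm_le ((hg0.const_mul s).mul_const _)
    (Eventually.of_forall fun u => ?_)
  rw [← integral_sub (hin u z) (hin u z')]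
  refine (norm_integral_le_of_norm_le_const
    (C := ‖z - z'‖ * Real.exp (-‖u‖ ^ 2)) (Eventually.of_forall fun ω => ?_)).trans_eq ?_
  · rw [← sub_mul, norm_mul, Real.norm_of_nonneg (Real.exp_pos _).le]
    gcongr
    refine (abs_abs_sub_abs_le_abs_sub _ _).trans ?_
    rw [← inner_sub_left, sub_sub_sub_cancel_left, norm_sub_rev z z']
    simpa [hω] using abs_real_inner_le_norm (z' - z) (ω : V)
  · rw [← hs]; ring

lemma nuT_props (r₀ : V → V → ℝ)
    (hr_nonneg : ∀ u v : V, 0 ≤ r₀ u v)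
    (hr_C1 : ContDiff ℝ 1 (Function.uncurry r₀))
    (C : ℝ) (hC : 0 < C) (hr_bd : R0Bounds r₀ C)
    (C₂ : ℝ) (hr_db : R0DerivBounds r₀ C₂)
    (Ci κ : ℝ) (hCi : 0 < Ci) (hκ : 0 < κ) :
    ∃ m > 0, (∀ z, m ≤ nuT r₀ Ci κ z) ∧ ∃ L > 0, ∀ z z',
      |nuT r₀ Ci κ z - nuT r₀ Ci κ z'| ≤ L * ‖z - z'‖ := by
  obtain ⟨m, hm, h1, L₀, h2⟩ := nu0_props r₀ hr_C1 C hC hr_bd hr_nonneg C₂ hr_db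
  obtain ⟨h3, L₁, h4⟩ := nu1_props
  have hc : 0 < Ci * κ := mul_pos hCi hκ
  refine ⟨m, hm, fun z => ?_, |L₀| + Ci * κ * |L₁| + 1, by positivity, fun z z' => ?_⟩
  · have := mul_nonneg hc.le (h3 z)
    unfold nuT
    linarith [h1 z]
  · unfold nuT
    have e1 := h2 z z'
    have e2 := mul_le_mul_of_nonneg_left (h4 z z') hc.le
    have e : nu0 r₀ z + Ci * κ * nu1 z - (nu0 r₀ z' + Ci * κ * nu1 z') =
      (nu0 r₀ z - nu0 r₀ z') + Ci * κ * (nu1 z - nu1 z') := by ring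
    rw [e]
    refine (abs_add_le _ _).trans ?_
    rw [abs_mul, abs_of_pos hc]
    have n0 := norm_nonneg (z - z')
    have e3 : L₀ * ‖z - z'‖ ≤ |L₀| * ‖z - z'‖ := by gcongr; exact le_abs_self _
    have e4 : Ci * κ * (L₁ * ‖z - z'‖) ≤ Ci * κ * (|L₁| * ‖z - z'‖) := by
      gcongr; exact le_abs_self _
    linarith

/-! ### Composition of majorants -/

/-- The weighted majorant `(1 + ‖x‖ + ‖y‖) * qmaj x y` of the kernel of `K`. -/
def Pmaj (x y : V) : ℝ := Sz x y * qmaj x y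

lemma Pmaj_nonneg (x y : V) : 0 ≤ Pmaj x y := mul_nonneg (Sz_pos x y).le (qmaj_nonneg x y)

@[fun_prop]
lemma measurable_Pmaj {α : Type*} [MeasurableSpace α] {a b : α → V} (ha : Measurable a)
    (hb : Measurable b) : Measurable fun p => Pmaj (a p) (b p) := by
  unfold Pmaj Sz qmaj
  fun_prop

lemma measurable_Kker {r₀ : V → V → ℝ} (hr_C1 : ContDiff ℝ 1 (Function.uncurry r₀)) (Ci κ : ℝ) :
    Measurable fun p : V × V => Kker r₀ Ci κ p.1 p.2 := by
  have h : Measurable fun p : V × V => r₀ p.1 p.2 := hr_C1.continuous.measurable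
  unfold Kker
  fun_prop

/-- Composing two symmetrized majorants and integrating in the first variable costs one factor
`1 + ‖·‖` for each of them, uniformly over shifts `h` of length at most `4`. -/
lemma compose_bound : ∃ B > 0, ∀ h : V, ‖h‖ ≤ 4 → ∀ F : V → ℝ≥0∞, Measurable F →
    ∫⁻ v, ∫⁻ z, ENNReal.ofReal (Pmaj v z + Pmaj v (z + h)) *
        ∫⁻ u, ENNReal.ofReal (Pmaj z u + Pmaj (z + h) u) * F u ≤
      ENNReal.ofReal B * ∫⁻ u, ENNReal.ofReal ((1 + ‖u‖) ^ 2) * F u := by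
  obtain ⟨M₁, hM₁, h1⟩ := qmaj_moment 1
  obtain ⟨M₂, hM₂, h2⟩ := qmaj_moment 2
  refine ⟨6 * M₁ * (6 * M₂), by positivity, fun h hh F hF => ?_⟩
  have hshift : ∀ z : V, 1 + ‖z + h‖ ≤ 5 * (1 + ‖z‖) := fun z => by
    have := norm_add_le z h
    linarith [norm_nonneg z]
  have hshift' : ∀ z : V, 1 + ‖z‖ ≤ 5 * (1 + ‖z + h‖) := fun z => by
    have := norm_sub_le (z + h) h
    rw [add_sub_cancel_right] at this
    linarith [norm_nonneg (z + h)]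
  have i1 : ∀ z, ∫⁻ v, ENNReal.ofReal (Pmaj v z + Pmaj v (z + h)) ≤
      ENNReal.ofReal (6 * M₁) * ENNReal.ofReal (1 + ‖z‖) := by
    intro z
    simp only [pow_one] at h1
    calc _ = ∫⁻ v, (ENNReal.ofReal (Pmaj v z) + ENNReal.ofReal (Pmaj v (z + h))) := by
          simp_rw [ENNReal.ofReal_add (Pmaj_nonneg _ _) (Pmaj_nonneg _ _)]
      _ = (∫⁻ v, ENNReal.ofReal (Pmaj v z)) + ∫⁻ v, ENNReal.ofReal (Pmaj v (z + h)) :=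
          lintegral_add_left (by fun_prop) _
      _ ≤ ENNReal.ofReal (M₁ * (1 + ‖z‖)) + ENNReal.ofReal (M₁ * (1 + ‖z + h‖)) :=
          add_le_add (h1 z) (h1 (z + h))
      _ ≤ _ := by
          rw [← ENNReal.ofReal_add (by positivity) (by positivity),
            ← ENNReal.ofReal_mul (by positivity)]
          refine ENNReal.ofReal_le_ofReal ?_
          nlinarith [hshift z]
  have i2' : ∀ u, ∫⁻ z, ENNReal.ofReal ((1 + ‖z‖) * Pmaj z u) ≤
      ENNReal.ofReal (M₂ * (1 + ‖u‖) ^ 2) := by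
    intro u
    refine le_trans (lintegral_mono fun z => ENNReal.ofReal_le_ofReal ?_) (h2 u)
    have hS := Sz_pos z u
    have hq := qmaj_nonneg z u
    have : 1 + ‖z‖ ≤ Sz z u := by unfold Sz; linarith [norm_nonneg u]
    calc (1 + ‖z‖) * Pmaj z u ≤ Sz z u * (Sz z u * qmaj z u) := by unfold Pmaj; gcongr
      _ = _ := by ring
  have i2 : ∀ u, ∫⁻ z, ENNReal.ofReal (1 + ‖z‖) * ENNReal.ofReal (Pmaj z u + Pmaj (z + h) u) ≤
      ENNReal.ofReal (6 * M₂) * ENNReal.ofReal ((1 + ‖u‖) ^ 2) := by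
    intro u
    have hm : Measurable fun z => ENNReal.ofReal ((1 + ‖z‖) * Pmaj z u) := by fun_prop
    calc _ ≤ ∫⁻ z, (ENNReal.ofReal ((1 + ‖z‖) * Pmaj z u) +
          ENNReal.ofReal 5 * ENNReal.ofReal ((1 + ‖z + h‖) * Pmaj (z + h) u)) := by
          refine lintegral_mono fun z => ?_
          have p1 := Pmaj_nonneg z u
          have p2 := Pmaj_nonneg (z + h) u
          rw [← ENNReal.ofReal_mul (by positivity), ← ENNReal.ofReal_mul (by norm_num),
            ← ENNReal.ofReal_add (by positivity) (by positivity)]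
          refine ENNReal.ofReal_le_ofReal ?_
          nlinarith [mul_le_mul_of_nonneg_right (hshift' z) p2]
      _ = (∫⁻ z, ENNReal.ofReal ((1 + ‖z‖) * Pmaj z u)) +
          ENNReal.ofReal 5 * ∫⁻ z, ENNReal.ofReal ((1 + ‖z‖) * Pmaj z u) := by
          rw [lintegral_add_left hm, lintegral_const_mul' _ _ ENNReal.ofReal_ne_top,
            lintegral_add_right_eq_self (fun z => ENNReal.ofReal ((1 + ‖z‖) * Pmaj z u)) h]
      _ ≤ ENNReal.ofReal (M₂ * (1 + ‖u‖) ^ 2) +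
          ENNReal.ofReal 5 * ENNReal.ofReal (M₂ * (1 + ‖u‖) ^ 2) := by
          gcongr <;> exact i2' u
      _ = _ := by
          rw [← ENNReal.ofReal_mul (by norm_num), ← ENNReal.ofReal_mul (by positivity),
            ← ENNReal.ofReal_add (by positivity) (by positivity)]
          congr 1; ring
  have ma : Measurable fun p : V × V =>
      ENNReal.ofReal (Pmaj p.1 p.2 + Pmaj p.1 (p.2 + h)) := by fun_prop
  have mb : Measurable fun p : V × V =>
      ENNReal.ofReal (Pmaj p.1 p.2 + Pmaj (p.1 + h) p.2) * F p.2 := by fun_prop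
  have mG : Measurable fun z => ∫⁻ u, ENNReal.ofReal (Pmaj z u + Pmaj (z + h) u) * F u :=
    mb.lintegral_prod_right'
  calc _ = ∫⁻ z, ∫⁻ v, ENNReal.ofReal (Pmaj v z + Pmaj v (z + h)) *
        ∫⁻ u, ENNReal.ofReal (Pmaj z u + Pmaj (z + h) u) * F u :=
        lintegral_lintegral_swap (ma.mul (mG.comp measurable_snd)).aemeasurable
    _ = ∫⁻ z, (∫⁻ v, ENNReal.ofReal (Pmaj v z + Pmaj v (z + h))) *
        ∫⁻ u, ENNReal.ofReal (Pmaj z u + Pmaj (z + h) u) * F u := by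
        refine lintegral_congr fun z => ?_
        exact lintegral_mul_const _ (by fun_prop)
    _ ≤ ∫⁻ z, ENNReal.ofReal (6 * M₁) * (ENNReal.ofReal (1 + ‖z‖) *
        ∫⁻ u, ENNReal.ofReal (Pmaj z u + Pmaj (z + h) u) * F u) := by
        refine lintegral_mono fun z => ?_
        rw [← mul_assoc]
        gcongr
        exact i1 z
    _ = ENNReal.ofReal (6 * M₁) * ∫⁻ z, ∫⁻ u, ENNReal.ofReal (1 + ‖z‖) *
        (ENNReal.ofReal (Pmaj z u + Pmaj (z + h) u) * F u) := by
        rw [lintegral_const_mul' _ _ ENNReal.ofReal_ne_top]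
        congr 1
        refine lintegral_congr fun z => ?_
        rw [lintegral_const_mul' _ _ ENNReal.ofReal_ne_top]
    _ = ENNReal.ofReal (6 * M₁) * ∫⁻ u, ∫⁻ z, ENNReal.ofReal (1 + ‖z‖) *
        (ENNReal.ofReal (Pmaj z u + Pmaj (z + h) u) * F u) := by
        congr 1
        refine lintegral_lintegral_swap (Measurable.aemeasurable ?_)
        exact (by fun_prop : Measurable fun p : V × V => ENNReal.ofReal (1 + ‖p.1‖)).mul mb
    _ ≤ ENNReal.ofReal (6 * M₁) * ∫⁻ u, ENNReal.ofReal (6 * M₂) *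
        (ENNReal.ofReal ((1 + ‖u‖) ^ 2) * F u) := by
        gcongr with u
        simp_rw [← mul_assoc]
        rw [lintegral_mul_const]
        · gcongr
          exact i2 u
        · fun_prop
    _ = _ := by
        rw [lintegral_const_mul' _ _ ENNReal.ofReal_ne_top, ← mul_assoc,
          ← ENNReal.ofReal_mul (by positivity)]

/-- The inner integral of the composed kernel converges absolutely at almost every point. -/
lemma ae_lintegral_Pmaj_lt_top {F : V → ℝ≥0∞} (hF : Measurable F)
    (hfin : ∫⁻ u, ENNReal.ofReal ((1 + ‖u‖) ^ 2) * F u < ∞) :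
    ∀ᵐ z : V, ∫⁻ u, ENNReal.ofReal (Pmaj z u) * F u < ∞ := by
  obtain ⟨M₁, hM₁, h1⟩ := qmaj_moment 1
  have mb : Measurable fun p : V × V => ENNReal.ofReal (Pmaj p.1 p.2) * F p.2 := by
    fun_prop
  refine ae_lt_top mb.lintegral_prod_right' (ne_of_lt ?_)
  rw [lintegral_lintegral_swap mb.aemeasurable]
  calc _ ≤ ∫⁻ u, ENNReal.ofReal M₁ * (ENNReal.ofReal ((1 + ‖u‖) ^ 2) * F u) := by
        refine lintegral_mono fun u => ?_
        simp only
        rw [lintegral_mul_const _ (by fun_prop),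
          ← mul_assoc, ← ENNReal.ofReal_mul hM₁.le]
        gcongr
        have := h1 u
        simp only [pow_one] at this
        refine this.trans (ENNReal.ofReal_le_ofReal ?_)
        gcongr
        nlinarith [norm_nonneg u]
    _ < ∞ := by
        rw [lintegral_const_mul' _ _ ENNReal.ofReal_ne_top]
        exact ENNReal.mul_lt_top ENNReal.ofReal_lt_top hfin

/-! ### The oscillatory integral -/

/-- If the unimodular factor `ρ` changes sign under translation by `h`, averaging the integral with its
translate replaces `A g` by an increment of `A g`. -/
lemma enorm_integral_osc_le {A : V → ℝ} {ρ g : V → ℂ} {h : V} (hρ : ∀ z, ‖ρ z‖ = 1)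
    (hρh : ∀ z, ρ (z + h) = -ρ z) :
    ‖∫ z, (A z : ℂ) * ρ z * g z‖ₑ ≤
      ∫⁻ z, ‖(A z : ℂ) * g z - (A (z + h) : ℂ) * g (z + h)‖ₑ := by
  set Φ : V → ℂ := fun z => (A z : ℂ) * ρ z * g z with hΦ
  by_cases hi : Integrable Φ
  · have h2 : ∫ z, (Φ z + Φ (z + h)) = (∫ z, Φ z) + ∫ z, Φ z := by
      rw [integral_add hi (hi.comp_add_right h), integral_add_right_eq_self]
    have h3 : ‖∫ z, Φ z‖ₑ ≤ ‖∫ z, (Φ z + Φ (z + h))‖ₑ := by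
      rw [h2, ← two_mul, enorm_mul]
      refine le_mul_of_one_le_left zero_le ?_
      rw [← ofReal_norm, ← ENNReal.ofReal_one]
      exact ENNReal.ofReal_le_ofReal (by norm_num)
    refine h3.trans ((enorm_integral_le_lintegral_enorm _).trans_eq (lintegral_congr fun z => ?_))
    have : Φ z + Φ (z + h) = ρ z * ((A z : ℂ) * g z - (A (z + h) : ℂ) * g (z + h)) := by
      simp only [hΦ, hρh]; ring
    rw [this, enorm_mul, ← ofReal_norm (ρ z), hρ z, ENNReal.ofReal_one, one_mul]
  · rw [integral_undef hi]; simp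

/-- The oscillating factor `exp (-i t n·z)`. -/
def phase (n : Fin 3 → ℤ) (t : ℝ) (z : V) : ℂ :=
  Complex.exp (((-t * ∑ i : Fin 3, (n i : ℝ) * z i : ℝ) : ℂ) * Complex.I)

lemma norm_phase (n : Fin 3 → ℤ) (t : ℝ) (z : V) : ‖phase n t z‖ = 1 :=
  Complex.norm_exp_ofReal_mul_I _

/-- Translation by half a period in the direction of `n`. -/
lemma phase_shift {n : Fin 3 → ℤ} {t : ℝ} (ht : 0 < t) (hn : ‖nV n‖ ≠ 0) (z : V) :
    phase n t (z + (π / (t * ‖nV n‖ ^ 2)) • nV n) = -phase n t z := by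
  have hs : ∑ i : Fin 3, (n i : ℝ) * (z + (π / (t * ‖nV n‖ ^ 2)) • nV n) i =
      ∑ i : Fin 3, (n i : ℝ) * z i + π / t := by
    have hN : ‖nV n‖ ^ 2 = ∑ i : Fin 3, (n i : ℝ) * (n i : ℝ) := by
      rw [EuclideanSpace.norm_sq_eq]
      simp [nV, pow_two]
    have : ∀ i, (n i : ℝ) * (z + (π / (t * ‖nV n‖ ^ 2)) • nV n) i =
        (n i : ℝ) * z i + π / (t * ‖nV n‖ ^ 2) * ((n i : ℝ) * (n i : ℝ)) := by
      intro i
      have e : nV n i = (n i : ℝ) := rfl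
      simp only [PiLp.add_apply, PiLp.smul_apply, smul_eq_mul, e]
      ring
    simp_rw [this]
    rw [Finset.sum_add_distrib, ← Finset.mul_sum, ← hN]
    field_simp
  unfold phase
  rw [hs]
  have : (((-t * (∑ i : Fin 3, (n i : ℝ) * z i + π / t) : ℝ) : ℂ) * Complex.I) =
      ((-t * ∑ i : Fin 3, (n i : ℝ) * z i : ℝ) : ℂ) * Complex.I - π * Complex.I := by
    have e : -t * (∑ i : Fin 3, (n i : ℝ) * z i + π / t) =
      (-t * ∑ i : Fin 3, (n i : ℝ) * z i) - π := by field_simp; ring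
    rw [e]; push_cast; ring
  rw [this, Complex.exp_sub, Complex.exp_pi_mul_I]
  ring

/-- `K_t^{(n)} f` as a single oscillatory integral in `z`, with real amplitude
`K(v,z) exp (-t ν(z))` against `K f`. -/
lemma Ktn_eq (r₀ : V → V → ℝ) (Ci κ : ℝ) (n : Fin 3 → ℤ) (t : ℝ) (f : V → ℂ) (v : V) :
    Ktn r₀ Ci κ n t f v = ∫ z : V, ((Kker r₀ Ci κ v z * Real.exp (-t * nuT r₀ Ci κ z) : ℝ) : ℂ) *
      phase n t z * ∫ u : V, (Kker r₀ Ci κ z u : ℂ) * f u := by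
  unfold Ktn
  congr 1
  ext z
  simp_rw [mul_assoc]
  rw [integral_const_mul, integral_const_mul]
  have : Complex.exp (-(t : ℂ) * ((nuT r₀ Ci κ z : ℝ) +
      Complex.I * ((∑ i : Fin 3, (n i : ℝ) * z i : ℝ) : ℂ))) =
      ((Real.exp (-t * nuT r₀ Ci κ z) : ℝ) : ℂ) * phase n t z := by
    unfold phase
    rw [Complex.ofReal_exp, ← Complex.exp_add]
    congr 1
    push_cast
    ring
  rw [this]
  push_cast
  ring

/-- Increments of `exp (-t ν)`: the factor `t` produced by the mean value inequality is absorbed by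
giving up half of the decay rate. -/
lemma exp_decay_diff {m L t d a b : ℝ} (hm : 0 < m) (ht : 0 < t) (hL : 0 < L) (hd : 0 ≤ d)
    (ha : m ≤ a) (hb : m ≤ b) (hab : |a - b| ≤ L * d) :
    |Real.exp (-t * a) - Real.exp (-t * b)| ≤ 2 * L / m * d * Real.exp (-(m / 2) * t) := by
  have key : ∀ a b : ℝ, m ≤ a → a ≤ b → |a - b| ≤ L * d →
      |Real.exp (-t * a) - Real.exp (-t * b)| ≤ 2 * L / m * d * Real.exp (-(m / 2) * t) := by
    intro a b ha hle hab
    have h1 : Real.exp (-t * b) = Real.exp (-t * a) * Real.exp (-(t * (b - a))) := by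
      rw [← Real.exp_add]; ring_nf
    have h2 := Real.add_one_le_exp (-(t * (b - a)))
    have h3 := Real.exp_pos (-t * a)
    have hba : b - a ≤ L * d := by rw [abs_sub_comm] at hab; exact (le_abs_self _).trans hab
    have h4 : Real.exp (-t * b) ≤ Real.exp (-t * a) := Real.exp_le_exp.2 (by nlinarith)
    rw [abs_of_nonneg (by linarith)]
    have h5 : Real.exp (-t * a) ≤ Real.exp (-(m / 2) * t) * Real.exp (-(m / 2) * t) := by
      rw [← Real.exp_add]; exact Real.exp_le_exp.2 (by nlinarith)
    have h6 : t * Real.exp (-(m / 2) * t) ≤ 2 / m := by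
      have h7 := Real.add_one_le_exp (m / 2 * t)
      have h8 : Real.exp (-(m / 2) * t) * Real.exp (m / 2 * t) = 1 := by
        rw [← Real.exp_add]; ring_nf; simp
      have h9 := Real.exp_pos (-(m / 2) * t)
      rw [le_div_iff₀ hm]
      nlinarith
    have h9 := Real.exp_pos (-(m / 2) * t)
    calc _ ≤ Real.exp (-t * a) * (t * (b - a)) := by rw [h1]; nlinarith
      _ ≤ Real.exp (-(m / 2) * t) * Real.exp (-(m / 2) * t) * (t * (L * d)) := by gcongr
      _ = (t * Real.exp (-(m / 2) * t)) * (L * d * Real.exp (-(m / 2) * t)) := by ring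
      _ ≤ 2 / m * (L * d * Real.exp (-(m / 2) * t)) := by gcongr
      _ = _ := by ring
  rcases le_total a b with h | h
  · exact key a b ha h hab
  · rw [abs_sub_comm]; exact key b a hb h (by rwa [abs_sub_comm])

lemma enorm_le_of_abs_le {a b : ℝ} (h : |a| ≤ b) : ‖(a : ℂ)‖ₑ ≤ ENNReal.ofReal b := by
  rw [← ofReal_norm, Complex.norm_real]
  exact ENNReal.ofReal_le_ofReal h

/-- Bound by absolute values, without using the oscillation. The right-hand side is written with
`h = 0` to have the same form as in `Ktn_bound_shift`. -/
lemma Ktn_bound_zero {r₀ : V → V → ℝ} {Ci κ M m t : ℝ} (hM : 0 < M) (ht : 0 < t)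
    (hK : ∀ x y : V, |Kker r₀ Ci κ x y| ≤ M * Pmaj x y)
    (hν : ∀ z, m ≤ nuT r₀ Ci κ z) (n : Fin 3 → ℤ) (f : V → ℂ) (v : V) :
    ‖Ktn r₀ Ci κ n t f v‖ₑ ≤ ENNReal.ofReal (M ^ 2 * Real.exp (-m * t)) *
      ∫⁻ z, ENNReal.ofReal (Pmaj v z + Pmaj v (z + 0)) *
        ∫⁻ u, ENNReal.ofReal (Pmaj z u + Pmaj (z + 0) u) * ‖f u‖ₑ := by
  rw [Ktn_eq, ← lintegral_const_mul' _ _ ENNReal.ofReal_ne_top]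
  refine (enorm_integral_le_lintegral_enorm _).trans (lintegral_mono fun z => ?_)
  have hp := Pmaj_nonneg v z
  have e1 : ‖((Kker r₀ Ci κ v z * Real.exp (-t * nuT r₀ Ci κ z) : ℝ) : ℂ)‖ₑ ≤
      ENNReal.ofReal (M * Real.exp (-m * t)) * ENNReal.ofReal (Pmaj v z + Pmaj v (z + 0)) := by
    rw [← ENNReal.ofReal_mul (by positivity), add_zero]
    refine enorm_le_of_abs_le ?_
    rw [abs_mul, abs_of_pos (Real.exp_pos _)]
    have : Real.exp (-t * nuT r₀ Ci κ z) ≤ Real.exp (-m * t) :=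
      Real.exp_le_exp.2 (by nlinarith [hν z])
    calc _ ≤ (M * Pmaj v z) * Real.exp (-m * t) := by gcongr; exact hK v z
      _ ≤ (M * (Pmaj v z + Pmaj v z)) * Real.exp (-m * t) := by gcongr; linarith
      _ = _ := by ring
  have e2 : ‖∫ u : V, (Kker r₀ Ci κ z u : ℂ) * f u‖ₑ ≤ ENNReal.ofReal M *
      ∫⁻ u, ENNReal.ofReal (Pmaj z u + Pmaj (z + 0) u) * ‖f u‖ₑ := by
    rw [← lintegral_const_mul' _ _ ENNReal.ofReal_ne_top]
    refine (enorm_integral_le_lintegral_enorm _).trans (lintegral_mono fun u => ?_)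
    have hp := Pmaj_nonneg z u
    rw [enorm_mul, ← mul_assoc, ← ENNReal.ofReal_mul hM.le, add_zero]
    gcongr
    refine enorm_le_of_abs_le ((hK z u).trans ?_)
    gcongr; linarith
  rw [enorm_mul, enorm_mul, ← ofReal_norm (phase n t z), norm_phase, ENNReal.ofReal_one,
    mul_one]
  refine (mul_le_mul' e1 e2).trans_eq ?_
  have : M ^ 2 * Real.exp (-m * t) = M * Real.exp (-m * t) * M := by ring
  rw [this, ENNReal.ofReal_mul (by positivity : 0 ≤ M * Real.exp (-m * t))]
  ring

/-- A half-period shift of length `d` gains the factor `d` over the bound by absolute values. The two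
increments, of the amplitude `K(v,z) exp (-t ν(z))` and of `K f`, are estimated separately. -/
lemma Ktn_bound_shift {r₀ : V → V → ℝ} {Ci κ M m L t : ℝ} (hM : 0 < M) (ht : 0 < t) (hm : 0 < m)
    (hL : 0 < L)
    (hKm : Measurable fun p : V × V => Kker r₀ Ci κ p.1 p.2)
    (hK : ∀ x y : V, |Kker r₀ Ci κ x y| ≤ M * Pmaj x y)
    (hKd : ∀ (x y x' y' : V) (d : ℝ), d ≤ 4 → ‖x - x'‖ ≤ d → ‖y - y'‖ ≤ d →
        |Kker r₀ Ci κ x y - Kker r₀ Ci κ x' y'| ≤ M * d * (Pmaj x y + Pmaj x' y'))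
    (hν : ∀ z, m ≤ nuT r₀ Ci κ z)
    (hνL : ∀ z z', |nuT r₀ Ci κ z - nuT r₀ Ci κ z'| ≤ L * ‖z - z'‖)
    {n : Fin 3 → ℤ} {h : V} {d : ℝ} (hh : ‖h‖ = d) (hd : d ≤ 4)
    (hph : ∀ z, phase n t (z + h) = -phase n t z)
    {f : V → ℂ} (hf : Measurable f)
    (hfin : ∫⁻ u, ENNReal.ofReal ((1 + ‖u‖) ^ 2) * ‖f u‖ₑ < ∞) (v : V) :
    ‖Ktn r₀ Ci κ n t f v‖ₑ ≤
      ENNReal.ofReal (M ^ 2 * (2 + 2 * L / m) * d * Real.exp (-(m / 2) * t)) *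
      ∫⁻ z, ENNReal.ofReal (Pmaj v z + Pmaj v (z + h)) *
        ∫⁻ u, ENNReal.ofReal (Pmaj z u + Pmaj (z + h) u) * ‖f u‖ₑ := by
  have hd0 : 0 ≤ d := hh ▸ norm_nonneg h
  set g : V → ℂ := fun z => ∫ u : V, (Kker r₀ Ci κ z u : ℂ) * f u with hg
  set A : V → ℝ := fun z => Kker r₀ Ci κ v z * Real.exp (-t * nuT r₀ Ci κ z) with hA
  set X : ℝ := Real.exp (-(m / 2) * t) with hX
  have hX0 : 0 < X := Real.exp_pos _
  have hexp : ∀ z, Real.exp (-t * nuT r₀ Ci κ z) ≤ X := fun z =>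
    Real.exp_le_exp.2 (by nlinarith [hν z])
  have hzh : ∀ z : V, ‖z - (z + h)‖ = d := fun z => by simp [hh]
  -- absolute convergence of the inner integral at almost every point and its translate
  have hae := ae_lintegral_Pmaj_lt_top hf.enorm hfin
  have hKint : ∀ᵐ z : V, Integrable fun u => (Kker r₀ Ci κ z u : ℂ) * f u := by
    filter_upwards [hae] with z hz
    refine ⟨?_, ?_⟩
    · have : Measurable fun u => Kker r₀ Ci κ z u := hKm.comp (by fun_prop : Measurable fun u : V => (z, u))
      exact ((Complex.measurable_ofReal.comp this).mul hf).aestronglyMeasurable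
    · refine lt_of_le_of_lt ?_ (ENNReal.mul_lt_top (ENNReal.ofReal_lt_top (r := M)) hz)
      rw [← lintegral_const_mul' _ _ ENNReal.ofReal_ne_top]
      refine lintegral_mono fun u => ?_
      rw [enorm_mul, ← mul_assoc, ← ENNReal.ofReal_mul hM.le]
      gcongr
      exact enorm_le_of_abs_le (hK z u)
  have hKint' : ∀ᵐ z : V, Integrable fun u => (Kker r₀ Ci κ (z + h) u : ℂ) * f u :=
    (measurePreserving_add_right (volume : Measure V) h).quasiMeasurePreserving.ae hKint
  rw [Ktn_eq, ← lintegral_const_mul' _ _ ENNReal.ofReal_ne_top]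
  refine (enorm_integral_osc_le (A := A) (g := g) (norm_phase n t) hph).trans
    (lintegral_mono_ae ?_)
  filter_upwards [hKint, hKint'] with z hz hz'
  set T := ∫⁻ u, ENNReal.ofReal (Pmaj z u + Pmaj (z + h) u) * ‖f u‖ₑ with hT
  have p1 := Pmaj_nonneg v z
  have p2 := Pmaj_nonneg v (z + h)
  have g1 : ‖g z‖ₑ ≤ ENNReal.ofReal M * T := by
    rw [hT, ← lintegral_const_mul' _ _ ENNReal.ofReal_ne_top]
    refine (enorm_integral_le_lintegral_enorm _).trans (lintegral_mono fun u => ?_)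
    rw [enorm_mul, ← mul_assoc, ← ENNReal.ofReal_mul hM.le]
    gcongr
    refine enorm_le_of_abs_le ((hK z u).trans ?_)
    gcongr; linarith [Pmaj_nonneg (z + h) u]
  have g2 : ‖g z - g (z + h)‖ₑ ≤ ENNReal.ofReal (M * d) * T := by
    rw [hT, ← lintegral_const_mul' _ _ ENNReal.ofReal_ne_top]
    simp only [hg]
    rw [← integral_sub hz hz']
    refine (enorm_integral_le_lintegral_enorm _).trans (lintegral_mono fun u => ?_)
    rw [← sub_mul, ← Complex.ofReal_sub, enorm_mul, ← mul_assoc,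
      ← ENNReal.ofReal_mul (by positivity)]
    gcongr
    exact enorm_le_of_abs_le (hKd z u (z + h) u d hd (hzh z).le (by simpa using hd0))
  have a2 : ‖(A (z + h) : ℂ)‖ₑ ≤ ENNReal.ofReal (M * X * (Pmaj v z + Pmaj v (z + h))) := by
    refine enorm_le_of_abs_le ?_
    simp only [hA]
    rw [abs_mul, abs_of_pos (Real.exp_pos _)]
    calc _ ≤ (M * Pmaj v (z + h)) * X := by
          gcongr
          · exact hK _ _
          · exact hexp _
      _ ≤ (M * (Pmaj v z + Pmaj v (z + h))) * X := by gcongr; linarith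
      _ = _ := by ring
  have a1 : ‖((A z - A (z + h) : ℝ) : ℂ)‖ₑ ≤
      ENNReal.ofReal (M * (1 + 2 * L / m) * d * X * (Pmaj v z + Pmaj v (z + h))) := by
    refine enorm_le_of_abs_le ?_
    have e : A z - A (z + h) =
        (Kker r₀ Ci κ v z - Kker r₀ Ci κ v (z + h)) * Real.exp (-t * nuT r₀ Ci κ z) +
        Kker r₀ Ci κ v (z + h) *
          (Real.exp (-t * nuT r₀ Ci κ z) - Real.exp (-t * nuT r₀ Ci κ (z + h))) := by
      simp only [hA]; ring
    have k1 := hKd v z v (z + h) d hd (by simpa using hd0) (hzh z).le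
    have k2 := exp_decay_diff hm ht hL hd0 (hν z) (hν (z + h))
      ((hνL z (z + h)).trans_eq (by rw [hzh]))
    rw [e]
    refine (abs_add_le _ _).trans ?_
    rw [abs_mul, abs_mul, abs_of_pos (Real.exp_pos _)]
    calc _ ≤ M * d * (Pmaj v z + Pmaj v (z + h)) * X +
          M * Pmaj v (z + h) * (2 * L / m * d * X) := by
          gcongr
          · exact hexp z
          · exact hK _ _
      _ ≤ M * d * (Pmaj v z + Pmaj v (z + h)) * X +
          M * (Pmaj v z + Pmaj v (z + h)) * (2 * L / m * d * X) := by gcongr; linarith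
      _ = _ := by ring
  have e : (A z : ℂ) * g z - (A (z + h) : ℂ) * g (z + h) =
      ((A z - A (z + h) : ℝ) : ℂ) * g z + (A (z + h) : ℂ) * (g z - g (z + h)) := by
    push_cast; ring
  rw [e]
  refine (enorm_add_le _ _).trans ?_
  rw [enorm_mul, enorm_mul]
  refine (add_le_add (mul_le_mul' a1 g1) (mul_le_mul' a2 g2)).trans_eq ?_
  rw [← mul_assoc, ← mul_assoc, ← mul_assoc, ← ENNReal.ofReal_mul (by positivity),
    ← ENNReal.ofReal_mul (by positivity), ← ENNReal.ofReal_mul (by positivity), ← add_mul,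
    ← ENNReal.ofReal_add (by positivity) (by positivity)]
  congr 2
  ring

lemma lintegral_weight_le {f : V → ℂ} (hi : Integrable (fun v : V => jap v ^ 3 * ‖f v‖)) :
    ∫⁻ u, ENNReal.ofReal ((1 + ‖u‖) ^ 2) * ‖f u‖ₑ ≤
      ENNReal.ofReal (2 * ∫ v : V, jap v ^ 3 * ‖f v‖) := by
  rw [← integral_const_mul, ofReal_integral_eq_lintegral_ofReal (hi.const_mul 2)]
  · refine lintegral_mono fun u => ?_
    rw [← ofReal_norm, ← ENNReal.ofReal_mul (by positivity), ← mul_assoc]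
    refine ENNReal.ofReal_le_ofReal ?_
    gcongr
    have h1 : jap u ^ 2 = 1 + ‖u‖ ^ 2 := Real.sq_sqrt (by positivity)
    have h2 : 1 ≤ jap u := by
      unfold jap
      rw [Real.one_le_sqrt]
      nlinarith [sq_nonneg ‖u‖]
    have h3 : jap u ^ 2 ≤ jap u ^ 3 := pow_le_pow_right₀ h2 (by norm_num)
    nlinarith [sq_nonneg (1 - ‖u‖)]
  · refine Eventually.of_forall fun u => ?_
    have : 0 ≤ jap u := Real.sqrt_nonneg _
    simp only [Pi.zero_apply]
    positivity

/-- Integrating a pointwise bound. If the left integrand were not integrable, its integral would be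
`0` and the claim trivial. -/
lemma integral_norm_Ktn_le {r₀ : V → V → ℝ} {Ci κ t c B I : ℝ} {n : Fin 3 → ℤ} {f : V → ℂ}
    {h : V} (hc : 0 ≤ c) (hB : 0 < B)
    (hI : 0 ≤ I) (hfI : ∫⁻ u, ENNReal.ofReal ((1 + ‖u‖) ^ 2) * ‖f u‖ₑ ≤ ENNReal.ofReal (2 * I))
    (hcomp : ∫⁻ v, ∫⁻ z, ENNReal.ofReal (Pmaj v z + Pmaj v (z + h)) *
        ∫⁻ u, ENNReal.ofReal (Pmaj z u + Pmaj (z + h) u) * ‖f u‖ₑ ≤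
      ENNReal.ofReal B * ∫⁻ u, ENNReal.ofReal ((1 + ‖u‖) ^ 2) * ‖f u‖ₑ)
    (hb : ∀ v, ‖Ktn r₀ Ci κ n t f v‖ₑ ≤ ENNReal.ofReal c *
      ∫⁻ z, ENNReal.ofReal (Pmaj v z + Pmaj v (z + h)) *
        ∫⁻ u, ENNReal.ofReal (Pmaj z u + Pmaj (z + h) u) * ‖f u‖ₑ) :
    ∫ v, ‖Ktn r₀ Ci κ n t f v‖ ≤ c * (2 * B) * I := by
  by_cases hi : Integrable fun v => ‖Ktn r₀ Ci κ n t f v‖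
  · rw [← ENNReal.ofReal_le_ofReal_iff (by positivity),
      ofReal_integral_eq_lintegral_ofReal hi (Eventually.of_forall fun _ => norm_nonneg _)]
    simp_rw [ofReal_norm]
    calc _ ≤ ∫⁻ v, ENNReal.ofReal c * ∫⁻ z, ENNReal.ofReal (Pmaj v z + Pmaj v (z + h)) *
          ∫⁻ u, ENNReal.ofReal (Pmaj z u + Pmaj (z + h) u) * ‖f u‖ₑ := lintegral_mono hb
      _ ≤ ENNReal.ofReal c * (ENNReal.ofReal B * ENNReal.ofReal (2 * I)) := by
          rw [lintegral_const_mul' _ _ ENNReal.ofReal_ne_top]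
          gcongr
          exact hcomp.trans (by gcongr)
      _ = _ := by
          rw [← ENNReal.ofReal_mul hB.le, ← ENNReal.ofReal_mul hc]
          congr 1; ring
  · rw [integral_undef hi]; positivity

/-! ### The decay estimate -/

/-- oscillatory decay estimate for `K_t^{(n)} = K e^{−t(ν+i n·v)} K`. -/
theorem stmt_10 (r₀ : V → V → ℝ)
    (hr_nonneg : ∀ u v : V, 0 ≤ r₀ u v)
    (hr_C1 : ContDiff ℝ 1 (Function.uncurry r₀))
    (C : ℝ) (hC : 0 < C) (hr_bd : R0Bounds r₀ C)
    (C₂ : ℝ) (hC₂ : 0 < C₂) (hr_db : R0DerivBounds r₀ C₂)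
    (Ci κ : ℝ) (hCi : 0 < Ci) (hκ : 0 < κ) :
    ∃ C₀ > 0, ∃ C₁ > 0, ∀ n : Fin 3 → ℤ, ∀ t : ℝ, 0 < t → ∀ f : V → ℂ,
      Measurable f → Integrable (fun v : V => jap v ^ 3 * ‖f v‖) →
      ∫ v : V, ‖Ktn r₀ Ci κ n t f v‖ ≤
        C₁ / (1 + ‖nV n‖ * t) * Real.exp (-C₀ * t) * ∫ v : V, jap v ^ 3 * ‖f v‖ := by
  obtain ⟨M, hM, hK, hKd⟩ :=
    Kker_bounds r₀ hr_nonneg hr_C1 C hC hr_bd C₂ hC₂ hr_db Ci κ hCi hκ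
  obtain ⟨m, hm, hν, L, hL, hνL⟩ :=
    nuT_props r₀ hr_nonneg hr_C1 C hC hr_bd C₂ hr_db Ci κ hCi hκ
  obtain ⟨B, hB, hcomp⟩ := compose_bound
  have hpi := Real.pi_pos
  set a : ℝ := M ^ 2 with ha
  set b : ℝ := M ^ 2 * (2 + 2 * L / m) with hb
  have ha0 : 0 < a := by positivity
  have hb0 : 0 < b := by positivity
  refine ⟨m / 2, by positivity, (a * 2 + b * (2 * π)) * (2 * B), by positivity, ?_⟩
  intro n t ht f hf hfi
  have hI : 0 ≤ ∫ v : V, jap v ^ 3 * ‖f v‖ :=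
    integral_nonneg fun v => mul_nonneg (pow_nonneg (Real.sqrt_nonneg _) 3) (norm_nonneg _)
  have hfI := lintegral_weight_le hfi
  set I := ∫ v : V, jap v ^ 3 * ‖f v‖ with hIdef
  set X := Real.exp (-(m / 2) * t) with hX
  have hX0 : 0 < X := Real.exp_pos _
  set s := ‖nV n‖ with hs
  have hs0 : 0 ≤ s := norm_nonneg _
  have hst : 0 < 1 + s * t := by positivity
  have hgoal : ∀ c, 0 ≤ c → c ≤ (a * 2 + b * (2 * π)) / (1 + s * t) * X →
      c * (2 * B) * I ≤ (a * 2 + b * (2 * π)) * (2 * B) / (1 + s * t) * X * I := by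
    intro c hc hcl
    calc c * (2 * B) * I ≤ ((a * 2 + b * (2 * π)) / (1 + s * t) * X) * (2 * B) * I := by gcongr
      _ = _ := by ring
  -- for `|n| t ≤ 1` the factor `1 / (1 + |n| t)` is at least `1 / 2` and no oscillation is needed;
  -- otherwise half a wavelength, `π / (|n| t)`, is less than `4`
  rcases le_or_gt (s * t) 1 with hcase | hcase
  · refine (integral_norm_Ktn_le (h := 0) (c := a * Real.exp (-m * t)) (by positivity) hB hI hfI
      (hcomp 0 (by simp) _ hf.enorm) (Ktn_bound_zero hM ht hK hν n f)).trans
      (hgoal _ (by positivity) ?_)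
    have h1 : Real.exp (-m * t) ≤ X := Real.exp_le_exp.2 (by nlinarith)
    have h2 : a ≤ (a * 2 + b * (2 * π)) / (1 + s * t) := by
      rw [le_div_iff₀ hst]
      nlinarith [mul_pos hb0 hpi]
    gcongr
  · have hspos : 0 < s := by
      rcases hs0.eq_or_lt with h | h
      · rw [← h] at hcase; norm_num at hcase
      · exact h
    have hnorm : ‖(π / (t * s ^ 2)) • nV n‖ = π / (t * s) := by
      rw [norm_smul, Real.norm_of_nonneg (by positivity), ← hs]
      field_simp
    have hd : π / (t * s) ≤ 4 := by
      rw [div_le_iff₀ (by positivity)]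
      nlinarith [Real.pi_le_four]
    have hd2 : π / (t * s) ≤ 2 * π / (1 + s * t) := by
      rw [div_le_div_iff₀ (by positivity) hst]
      nlinarith
    refine (integral_norm_Ktn_le (h := (π / (t * s ^ 2)) • nV n)
      (c := b * (π / (t * s)) * X) (by positivity) hB hI hfI
      (hcomp _ (hnorm.trans_le hd) _ hf.enorm)
      (Ktn_bound_shift hM ht hm hL (measurable_Kker hr_C1 Ci κ) hK hKd hν hνL hnorm hd
        (phase_shift ht hspos.ne') hf (hfI.trans_lt ENNReal.ofReal_lt_top))).trans
      (hgoal _ (by positivity) ?_)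
    calc b * (π / (t * s)) * X ≤ b * (2 * π / (1 + s * t)) * X := by gcongr
      _ = b * (2 * π) / (1 + s * t) * X := by ring
      _ ≤ _ := by gcongr; linarith
end
end

section
/- For every m ≥ 0 there exists a constant C > 0 such that for l ∈ {0,1}: ∫_{ℝ³} ⟨v⟩^m |∂_{z₁}^l K(v,z)| d³v ≤ C ⟨z⟩^{m+2} for all z ∈ ℝ³, and ∫_{ℝ³} ⟨z⟩^m |∂_{z₁}^l K(z,u)| d³z ≤ C ⟨u⟩^{m+2} for all u ∈ ℝ³, where ∂_{z₁} denotes the partial derivative with respect to the first coordinate of z. -/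
/-!
The estimate rests on one change of variables. Put `w = z - v` and `a = ⟪w, v⟫ / |w|`. Away from
the null set `v = z`, the kernel and its first derivatives, in either slot, are dominated by a
constant times

  `(1 + |v|)(1 + |w|) e^{-|v|²/2} + |w|⁻² (1 + |v| + |w|) e^{-a²/2}`

(`gaussPart` and `singPart`). This is `abs_Kker_le` for the kernel itself and
`hasDerivAt_Kker_line` for a directional derivative in which both arguments may move.

The first summand is harmless: the Gaussian absorbs every power of `v`, and `|w| ≤ |v| + |z|` costs
one power of `|z|` (`exists_gaussPart_bound`). For the second, `|w| = ⟪w, z⟫ / |w| - a` gives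
`1 + |v| + |w| ≤ 3 (1 + |z|)(1 + |a|)`; the powers of `1 + |a|` are absorbed by `e^{-a²/2}`, and
what is left is `(1 + |z|)^{m+1} |w|⁻² (1 + a²)⁻¹` (`exists_singPart_bound`). In polar coordinates
`v - z = r ω` one has `-a = r + ω · z`, and the Jacobian `r²` cancels `|w|⁻²`, so the integral along
each ray is at most `∫ (1 + (r + ω · z)²)⁻¹ dr = π`, uniformly in `z` and `ω`
(`lintegral_polarWeight_le`). Integrating over the sphere gives a bound of order `⟨z⟩^{m+2}`.

Both halves of the theorem integrate over the first slot of the kernel, so without a derivative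
they coincide; with one they differ only in the slot being differentiated.
-/

open MeasureTheory Real Filter
open scoped InnerProductSpace
noncomputable section

/-! ### The weight in polar coordinates -/

/-- The function `|w|⁻² (1 + (|w| + ⟪w, z⟫ / |w|)²)⁻¹`, which in polar coordinates `w = r ω` is
`r⁻² (1 + (r + ω · z)²)⁻¹`. -/
def polarWeight (z w : V) : ℝ :=
  (‖w‖ ^ 2)⁻¹ * (1 + (‖w‖ + ⟪w, z⟫_ℝ / ‖w‖) ^ 2)⁻¹

lemma polarWeight_nonneg (z w : V) : 0 ≤ polarWeight z w := by
  unfold polarWeight; positivity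

lemma measurable_polarWeight (z : V) : Measurable (polarWeight z) := by
  unfold polarWeight; fun_prop

lemma lintegral_inv_one_add_sq_translate (t : ℝ) :
    ∫⁻ r : ℝ, ENNReal.ofReal (1 + (r + t) ^ 2)⁻¹ = ENNReal.ofReal π := by
  rw [lintegral_add_right_eq_self (fun r : ℝ => ENNReal.ofReal (1 + r ^ 2)⁻¹) t,
    ← integral_univ_inv_one_add_sq,
    ofReal_integral_eq_lintegral_ofReal integrable_inv_one_add_sq]
  exact ae_of_all _ fun r => by positivity

/-- The Jacobian `r²` cancels the singularity, and along each ray the remaining integrand is a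
translate of `(1 + r²)⁻¹`; hence a bound that does not depend on `z`. -/
lemma lintegral_polarWeight_le (z : V) :
    ∫⁻ w : V, ENNReal.ofReal (polarWeight z w) ≤
      ENNReal.ofReal π * (volume : Measure V).toSphere Set.univ := by
  have hd : Module.finrank ℝ V = 3 := by simp
  set F : S2 × Set.Ioi (0 : ℝ) → ENNReal := fun p =>
    ENNReal.ofReal (((p.2 : ℝ) ^ 2)⁻¹ * (1 + ((p.2 : ℝ) + ⟪(p.1 : V), z⟫_ℝ) ^ 2)⁻¹) with hF
  have hFm : Measurable F := by
    rw [hF]; fun_prop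
  have h1 : ∫⁻ w : V, ENNReal.ofReal (polarWeight z w) =
      ∫⁻ p, F p ∂((volume : Measure V).toSphere.prod (Measure.volumeIoiPow (Module.finrank ℝ V - 1))) := by
    rw [← (volume : Measure V).measurePreserving_homeomorphUnitSphereProd.lintegral_comp hFm]
    conv_lhs => rw [← restrict_compl_singleton (μ := (volume : Measure V)) 0]
    rw [← lintegral_subtype_comap (measurableSet_singleton _).compl]
    refine lintegral_congr fun x => ?_
    simp only [hF, polarWeight, homeomorphUnitSphereProd_apply_snd_coe,
      homeomorphUnitSphereProd_apply_fst_coe, inner_smul_left]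
    congr 5
    simp [div_eq_inv_mul]
  rw [h1, lintegral_prod _ hFm.aemeasurable, hd]
  have h2 : ∀ ω : S2, ∫⁻ r, F (ω, r) ∂(Measure.volumeIoiPow (3 - 1)) ≤ ENNReal.ofReal π := by
    intro ω
    rw [← lintegral_inv_one_add_sq_translate ⟪(ω : V), z⟫_ℝ, Measure.volumeIoiPow,
      lintegral_withDensity_eq_lintegral_mul _ (by fun_prop) (by fun_prop)]
    calc _ = ∫⁻ r : Set.Ioi (0 : ℝ), ENNReal.ofReal (1 + ((r : ℝ) + ⟪(ω : V), z⟫_ℝ) ^ 2)⁻¹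
          ∂(Measure.comap Subtype.val volume) := by
            refine lintegral_congr fun r => ?_
            have hr : (0 : ℝ) < r := r.2
            simp only [hF, Pi.mul_apply]
            rw [← ENNReal.ofReal_mul (by positivity)]
            congr 1
            field_simp
      _ ≤ _ := by
        rw [lintegral_subtype_comap measurableSet_Ioi
          (fun r : ℝ => ENNReal.ofReal (1 + (r + ⟪(ω : V), z⟫_ℝ) ^ 2)⁻¹)]
        exact setLIntegral_le_lintegral _ _
  calc _ ≤ ∫⁻ _ω : S2, ENNReal.ofReal π ∂(volume : Measure V).toSphere := lintegral_mono h2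
    _ = _ := by rw [lintegral_const]

lemma exists_polarWeight_bound : ∃ P : ℝ, 0 ≤ P ∧ ∀ z : V,
    Integrable (fun v => polarWeight z (v - z)) ∧ ∫ v, polarWeight z (v - z) ≤ P := by
  refine ⟨(ENNReal.ofReal π * (volume : Measure V).toSphere Set.univ).toReal,
    ENNReal.toReal_nonneg, fun z => ?_⟩
  have hfin : ENNReal.ofReal π * (volume : Measure V).toSphere Set.univ ≠ ⊤ :=
    ENNReal.mul_ne_top ENNReal.ofReal_ne_top (measure_ne_top _ _)
  have hint : Integrable (polarWeight z) := by
    refine ⟨(measurable_polarWeight z).aestronglyMeasurable, ?_⟩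
    rw [hasFiniteIntegral_iff_ofReal (ae_of_all _ (polarWeight_nonneg z))]
    exact (lintegral_polarWeight_le z).trans_lt hfin.lt_top
  refine ⟨hint.comp_sub_right z, ?_⟩
  rw [integral_sub_right_eq_self (polarWeight z) z,
    integral_eq_lintegral_of_nonneg_ae (ae_of_all _ (polarWeight_nonneg z))
      (measurable_polarWeight z).aestronglyMeasurable]
  exact ENNReal.toReal_mono hfin (lintegral_polarWeight_le z)

/-! ### Dominating the kernel by integrable weights -/

lemma exists_gauss_bound (p : ℝ) : ∃ C > 0, ∀ x : ℝ, 0 ≤ x →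
    (1 + x) ^ p * Real.exp (-x ^ 2 / 2) ≤ C := by
  obtain ⟨n, hn⟩ := exists_nat_ge p
  refine ⟨n.factorial * Real.exp (3 / 2), by positivity, fun x hx => ?_⟩
  have h1 : (1 + x) ^ p ≤ (1 + x) ^ n := by
    rw [← Real.rpow_natCast]
    exact Real.rpow_le_rpow_of_exponent_le (by linarith) hn
  -- One term of the exponential series controls the power; the rest is `x - x² / 2 ≤ 1 / 2`.
  have h2 : (1 + x) ^ n ≤ n.factorial * Real.exp (1 + x) := by
    have := Real.pow_div_factorial_le_exp (1 + x) (by linarith) n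
    rwa [div_le_iff₀' (by positivity)] at this
  calc (1 + x) ^ p * Real.exp (-x ^ 2 / 2)
      ≤ (n.factorial * Real.exp (1 + x)) * Real.exp (-x ^ 2 / 2) := by
        gcongr; exact h1.trans h2
    _ = n.factorial * Real.exp (1 + x + -x ^ 2 / 2) := by rw [Real.exp_add (1 + x)]; ring
    _ ≤ n.factorial * Real.exp (3 / 2) := by
        gcongr; nlinarith [sq_nonneg (x - 1)]

lemma jap_pos (v : V) : 0 < jap v := by unfold jap; positivity

lemma jap_le (v : V) : jap v ≤ 1 + ‖v‖ := by
  unfold jap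
  rw [Real.sqrt_le_left (by positivity)]
  nlinarith [norm_nonneg v]

lemma one_add_norm_le_jap (v : V) : 1 + ‖v‖ ≤ 2 * jap v := by
  have h1 : 1 ≤ jap v := by
    unfold jap; rw [Real.one_le_sqrt]; nlinarith [norm_nonneg v]
  have h2 : ‖v‖ ≤ jap v := by
    unfold jap; apply Real.le_sqrt_of_sq_le; linarith
  linarith

/-- The squared scalar projection `⟪w, v⟫² / |w|²` of `v` on the direction of `w`. -/
def projSq (w v : V) : ℝ := ⟪w, v⟫_ℝ ^ 2 / ‖w‖ ^ 2

/-- Majorant, with `w = z - v`, of the parts of the kernel with Gaussian decay in `v`. -/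
def gaussPart (w v : V) : ℝ := (1 + ‖v‖) * (1 + ‖w‖) * Real.exp (-‖v‖ ^ 2 / 2)

/-- Majorant, with `w = z - v`, of the singular part of the kernel. The power `|w|⁻²` and the
halved exponent are what differentiating `|w|⁻¹ e^{-⟪w, v⟫² / |w|²}` once requires. -/
def singPart (w v : V) : ℝ :=
  (‖w‖ ^ 2)⁻¹ * (1 + ‖v‖ + ‖w‖) * Real.exp (-projSq w v / 2)

lemma gaussPart_nonneg (w v : V) : 0 ≤ gaussPart w v := by unfold gaussPart; positivity

lemma singPart_nonneg (w v : V) : 0 ≤ singPart w v := by unfold singPart; positivity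

lemma exists_gaussPart_bound (m : ℝ) (hm : 0 ≤ m) : ∃ C > 0, ∀ z v : V,
    jap v ^ m * gaussPart (z - v) v ≤ C * (1 + ‖z‖) * (1 + ‖v‖) ^ (-4 : ℝ) := by
  obtain ⟨C, hC, hb⟩ := exists_gauss_bound (m + 6)
  refine ⟨C, hC, fun z v => ?_⟩
  have hv : 0 < 1 + ‖v‖ := by positivity
  have h1 : jap v ^ m ≤ (1 + ‖v‖) ^ m := Real.rpow_le_rpow (jap_pos v).le (jap_le v) hm
  have h2 : 1 + ‖z - v‖ ≤ (1 + ‖z‖) * (1 + ‖v‖) := by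
    nlinarith [norm_sub_le z v, norm_nonneg z, norm_nonneg v]
  have h3 : (1 + ‖v‖) ^ m * ((1 + ‖v‖) * (1 + ‖v‖)) =
      (1 + ‖v‖) ^ (m + 6) * (1 + ‖v‖) ^ (-4 : ℝ) := by
    rw [← pow_two, ← Real.rpow_natCast, ← Real.rpow_add hv, ← Real.rpow_add hv]
    norm_num; congr 1; ring
  calc jap v ^ m * gaussPart (z - v) v
      ≤ (1 + ‖v‖) ^ m * ((1 + ‖v‖) * ((1 + ‖z‖) * (1 + ‖v‖)) * Real.exp (-‖v‖ ^ 2 / 2)) := by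
        unfold gaussPart; gcongr
    _ = (1 + ‖v‖) ^ m * ((1 + ‖v‖) * (1 + ‖v‖)) * ((1 + ‖z‖) * Real.exp (-‖v‖ ^ 2 / 2)) := by ring
    _ = ((1 + ‖v‖) ^ (m + 6) * Real.exp (-‖v‖ ^ 2 / 2)) *
          ((1 + ‖z‖) * (1 + ‖v‖) ^ (-4 : ℝ)) := by rw [h3]; ring
    _ ≤ C * ((1 + ‖z‖) * (1 + ‖v‖) ^ (-4 : ℝ)) := by
        gcongr; exact hb _ (norm_nonneg v)
    _ = _ := by ring

/-- After recentring at `z`, the quantity `|w| + ⟪w, z⟫ / |w|` in `polarWeight` is, up to sign, the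
scalar projection of `v` on the direction of `z - v`. -/
lemma polarWeight_eq (z v : V) (h : z ≠ v) :
    polarWeight z (v - z) = (‖z - v‖ ^ 2)⁻¹ * (1 + (⟪z - v, v⟫_ℝ / ‖z - v‖) ^ 2)⁻¹ := by
  have hw : ‖z - v‖ ≠ 0 := norm_ne_zero_iff.2 (sub_ne_zero.2 h)
  unfold polarWeight
  rw [norm_sub_rev v z]
  congr 3
  have h1 : ⟪v - z, z⟫_ℝ = -⟪z - v, v⟫_ℝ - ‖z - v‖ ^ 2 := by
    rw [← real_inner_self_eq_norm_sq]
    simp only [inner_sub_left, inner_sub_right, real_inner_comm]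
    ring
  rw [h1]
  field_simp
  ring

lemma exists_singPart_bound (m : ℝ) (hm : 0 ≤ m) : ∃ C > 0, ∀ z v : V, z ≠ v →
    jap v ^ m * singPart (z - v) v ≤ C * (1 + ‖z‖) ^ (m + 1) * polarWeight z (v - z) := by
  obtain ⟨C, hC, hb⟩ := exists_gauss_bound (m + 3)
  refine ⟨C * 3 ^ (m + 1), by positivity, fun z v h => ?_⟩
  rw [polarWeight_eq z v h]
  have hw : 0 < ‖z - v‖ := norm_pos_iff.2 (sub_ne_zero.2 h)
  set w := z - v with hwd
  set a := ⟪w, v⟫_ℝ / ‖w‖ with ha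
  have hproj : projSq w v = |a| ^ 2 := by rw [sq_abs, ha, div_pow]; rfl
  -- `|w| = ⟪w, z⟫ / |w| - a`, because `⟪w, v⟫ = ⟪w, z⟫ - |w|²`.
  have hwa : ‖w‖ ≤ |a| + ‖z‖ := by
    have h1 : ⟪w, v⟫_ℝ = ⟪w, z⟫_ℝ - ‖w‖ ^ 2 := by
      rw [← real_inner_self_eq_norm_sq, ← inner_sub_right]
      congr 1; rw [hwd]; abel
    have h2 : ⟪w, z⟫_ℝ ≤ ‖w‖ * ‖z‖ := real_inner_le_norm w z
    have h3 : a * ‖w‖ = ⟪w, v⟫_ℝ := by rw [ha]; field_simp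
    have h4 : -|a| ≤ a := neg_abs_le a
    by_contra! hcon
    nlinarith
  have hva : ‖v‖ ≤ ‖w‖ + ‖z‖ := by
    have : v = z - w := by rw [hwd]; abel
    rw [this]; linarith [norm_sub_le z w]
  have hX : 1 + ‖v‖ + ‖w‖ ≤ 3 * (1 + ‖z‖) * (1 + |a|) := by
    nlinarith [norm_nonneg z, abs_nonneg a, mul_nonneg (norm_nonneg z) (abs_nonneg a)]
  have hX0 : 0 < 1 + ‖v‖ + ‖w‖ := by positivity
  have ha0 : 0 < 1 + |a| := by positivity
  have h1 : jap v ^ m * (1 + ‖v‖ + ‖w‖) ≤ (3 * (1 + ‖z‖) * (1 + |a|)) ^ (m + 1) := by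
    calc jap v ^ m * (1 + ‖v‖ + ‖w‖) ≤ (1 + ‖v‖ + ‖w‖) ^ m * (1 + ‖v‖ + ‖w‖) := by
          gcongr
          · exact (jap_pos v).le
          · linarith [jap_le v]
      _ = (1 + ‖v‖ + ‖w‖) ^ (m + 1) := by rw [Real.rpow_add_one hX0.ne']
      _ ≤ _ := Real.rpow_le_rpow hX0.le hX (by linarith)
  have h2 : (1 + |a|) ^ (m + 1) * Real.exp (-|a| ^ 2 / 2) ≤ C * (1 + a ^ 2)⁻¹ := by
    have e1 : (1 + |a|) ^ (m + 3) = (1 + |a|) ^ (m + 1) * (1 + |a|) ^ 2 := by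
      rw [← Real.rpow_natCast, ← Real.rpow_add ha0]; congr 1; push_cast; ring
    have e2 := hb |a| (abs_nonneg a)
    rw [← div_eq_mul_inv, le_div_iff₀ (by positivity)]
    refine le_trans ?_ e2
    rw [e1]
    have : 1 + a ^ 2 ≤ (1 + |a|) ^ 2 := by nlinarith [sq_abs a, abs_nonneg a]
    calc _ ≤ (1 + |a|) ^ (m + 1) * Real.exp (-|a| ^ 2 / 2) * (1 + |a|) ^ 2 := by gcongr
      _ = _ := by ring
  calc jap v ^ m * singPart w v
      = (jap v ^ m * (1 + ‖v‖ + ‖w‖)) * ((‖w‖ ^ 2)⁻¹ * Real.exp (-|a| ^ 2 / 2)) := by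
        unfold singPart; rw [hproj]; ring
    _ ≤ (3 * (1 + ‖z‖) * (1 + |a|)) ^ (m + 1) * ((‖w‖ ^ 2)⁻¹ * Real.exp (-|a| ^ 2 / 2)) := by
        gcongr
    _ = 3 ^ (m + 1) * (1 + ‖z‖) ^ (m + 1) * (‖w‖ ^ 2)⁻¹ *
          ((1 + |a|) ^ (m + 1) * Real.exp (-|a| ^ 2 / 2)) := by
        rw [Real.mul_rpow (by positivity) ha0.le, Real.mul_rpow (by norm_num) (by positivity)]
        ring
    _ ≤ 3 ^ (m + 1) * (1 + ‖z‖) ^ (m + 1) * (‖w‖ ^ 2)⁻¹ * (C * (1 + a ^ 2)⁻¹) := by gcongr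
    _ = _ := by ring

/-- No measurability of `f` is needed: a non-integrable left-hand side has Bochner integral `0`,
and otherwise the integrable majorant decides. -/
lemma exists_integral_bound (m : ℝ) (hm : 0 ≤ m) : ∃ C > 0, ∀ (z : V) (A : ℝ) (f : V → ℝ),
    0 ≤ A → (∀ v, z ≠ v → |f v| ≤ A * (gaussPart (z - v) v + singPart (z - v) v)) →
    ∫ v, jap v ^ m * |f v| ≤ A * C * jap z ^ (m + 2) := by
  obtain ⟨C₁, hC₁, h₁⟩ := exists_gaussPart_bound m hm
  obtain ⟨C₂, hC₂, h₂⟩ := exists_singPart_bound m hm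
  obtain ⟨P, hP, h₃⟩ := exists_polarWeight_bound
  have hJ : Integrable (fun v : V => (1 + ‖v‖) ^ (-4 : ℝ)) :=
    integrable_one_add_norm (by simp; norm_num)
  set J := ∫ v : V, (1 + ‖v‖) ^ (-4 : ℝ) with hJd
  have hJ0 : 0 ≤ J := integral_nonneg fun v => by positivity
  refine ⟨(C₁ * J + C₂ * P + 1) * 2 ^ (m + 2), by positivity, fun z A f hA hf => ?_⟩
  set Z := 1 + ‖z‖ with hZ
  have hZ1 : 1 ≤ Z := by rw [hZ]; linarith [norm_nonneg z]
  have hg : Integrable (fun v : V => A * (C₁ * Z * (1 + ‖v‖) ^ (-4 : ℝ) +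
      C₂ * Z ^ (m + 1) * polarWeight z (v - z))) :=
    ((hJ.const_mul _).add ((h₃ z).1.const_mul _)).const_mul _
  have hae : ∀ᵐ v : V, z ≠ v := by
    have : ∀ᵐ v : V, v ≠ z := by simp [ae_iff]
    filter_upwards [this] with v hv using hv.symm
  have hjz : Z ^ (m + 2) ≤ 2 ^ (m + 2) * jap z ^ (m + 2) := by
    rw [← Real.mul_rpow (by norm_num) (jap_pos z).le]
    exact Real.rpow_le_rpow (by linarith) (one_add_norm_le_jap z) (by linarith)
  calc ∫ v, jap v ^ m * |f v|
      ≤ ∫ v : V, A * (C₁ * Z * (1 + ‖v‖) ^ (-4 : ℝ) +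
          C₂ * Z ^ (m + 1) * polarWeight z (v - z)) := by
        refine integral_mono_of_nonneg (ae_of_all _ fun v => ?_) hg ?_
        · exact mul_nonneg (Real.rpow_nonneg (jap_pos v).le _) (abs_nonneg _)
        · filter_upwards [hae] with v hv
          have hj : 0 ≤ jap v ^ m := Real.rpow_nonneg (jap_pos v).le _
          calc jap v ^ m * |f v|
              ≤ jap v ^ m * (A * (gaussPart (z - v) v + singPart (z - v) v)) := by
                gcongr; exact hf v hv
            _ = A * (jap v ^ m * gaussPart (z - v) v + jap v ^ m * singPart (z - v) v) := by ring
            _ ≤ _ := mul_le_mul_of_nonneg_left (add_le_add (h₁ z v) (h₂ z v hv)) hA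
    _ = A * (C₁ * Z * J + C₂ * Z ^ (m + 1) * ∫ v, polarWeight z (v - z)) := by
        rw [integral_const_mul, integral_add (hJ.const_mul _) ((h₃ z).1.const_mul _),
          integral_const_mul, integral_const_mul]
    _ ≤ A * (C₁ * Z ^ (m + 2) * J + C₂ * Z ^ (m + 2) * P) := by
        have e1 : Z ≤ Z ^ (m + 2) := Real.self_le_rpow_of_one_le hZ1 (by linarith)
        have e2 : Z ^ (m + 1) ≤ Z ^ (m + 2) :=
          Real.rpow_le_rpow_of_exponent_le hZ1 (by linarith)
        have e3 : C₂ * Z ^ (m + 1) * ∫ v, polarWeight z (v - z) ≤ C₂ * Z ^ (m + 2) * P :=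
          mul_le_mul (by gcongr) (h₃ z).2 (integral_nonneg fun v => polarWeight_nonneg _ _)
            (by positivity)
        have e4 : C₁ * Z * J ≤ C₁ * Z ^ (m + 2) * J := by gcongr
        exact mul_le_mul_of_nonneg_left (add_le_add e4 e3) hA
    _ = A * (C₁ * J + C₂ * P) * Z ^ (m + 2) := by ring
    _ ≤ A * (C₁ * J + C₂ * P + 1) * (2 ^ (m + 2) * jap z ^ (m + 2)) := by
        refine mul_le_mul ?_ hjz (by positivity) (by positivity)
        exact mul_le_mul_of_nonneg_left (by linarith) hA
    _ = _ := by ring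

/-! ### Derivatives of the kernel along lines -/

/-- Half of the Gaussian absorbs the factors `|x|` and `x²` produced by differentiation. -/
lemma exp_neg_mul_bounds (x : ℝ) :
    |x| * Real.exp (-x ^ 2) ≤ Real.exp (-x ^ 2 / 2) ∧
    x ^ 2 * Real.exp (-x ^ 2) ≤ Real.exp (-x ^ 2 / 2) ∧
    Real.exp (-x ^ 2) ≤ Real.exp (-x ^ 2 / 2) := by
  have h0 : Real.exp (-x ^ 2) = Real.exp (-x ^ 2 / 2) * Real.exp (-x ^ 2 / 2) := by
    rw [← Real.exp_add]; congr 1; ring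
  have hE := Real.exp_pos (-x ^ 2 / 2)
  -- `y ≤ e^{y/2}` for `y ≥ 0`, applied to `y = x²`.
  have h1 : x ^ 2 * Real.exp (-x ^ 2 / 2) ≤ 1 := by
    have h2 : x ^ 2 ≤ Real.exp (x ^ 2 / 2) := by
      have h3 := Real.quadratic_le_exp_of_nonneg (x := x ^ 2 / 2) (by positivity)
      nlinarith [sq_nonneg (x ^ 2 / 2 - 1)]
    calc _ ≤ Real.exp (x ^ 2 / 2) * Real.exp (-x ^ 2 / 2) := by gcongr
      _ = 1 := by rw [← Real.exp_add, ← Real.exp_zero]; congr 1; ring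
  have h4 : Real.exp (-x ^ 2 / 2) ≤ 1 := by
    rw [Real.exp_le_one_iff]; nlinarith [sq_nonneg x]
  have h5 : |x| * Real.exp (-x ^ 2 / 2) ≤ 1 := by
    rcases le_total |x| 1 with h | h
    · calc |x| * Real.exp (-x ^ 2 / 2) ≤ 1 * 1 := by gcongr
        _ = 1 := by ring
    · refine le_trans ?_ h1
      gcongr
      rw [← sq_abs]; nlinarith
  refine ⟨?_, ?_, ?_⟩
  · rw [h0, ← mul_assoc]; nlinarith
  · rw [h0, ← mul_assoc]; nlinarith
  · rw [h0]; nlinarith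

lemma hasDerivAt_norm_line (w e : V) (hw : w ≠ 0) :
    HasDerivAt (fun t : ℝ => ‖w + t • e‖) (⟪w, e⟫_ℝ / ‖w‖) 0 := by
  have h1 : HasDerivAt (fun t : ℝ => w + t • e) e 0 := by
    simpa using ((hasDerivAt_id (0 : ℝ)).smul_const e).const_add w
  have h2 := h1.norm_sq.sqrt (by simpa using hw)
  simp only [Real.sqrt_sq (norm_nonneg _), zero_smul, add_zero] at h2
  convert h2 using 1
  rw [mul_div_mul_left _ _ two_ne_zero]

/-- The singular term of the kernel along the line on which `w` moves with velocity `e₁` and `v`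
with velocity `e₂`. Writing `n = |w|`, `p = ⟪w, v⟫`, `a = p / n`, its derivative is
`n⁻² e^{-a²} (-n' - 2 a p' + 2 a² n')`. -/
lemma hasDerivAt_singular (w v e₁ e₂ : V) (hw : w ≠ 0) (h₁ : ‖e₁‖ ≤ 1) (h₂ : ‖e₂‖ ≤ 1) :
    ∃ d : ℝ, HasDerivAt (fun t : ℝ => ‖w + t • e₁‖⁻¹ *
      Real.exp (-(⟪w + t • e₁, v + t • e₂⟫_ℝ ^ 2 / ‖w + t • e₁‖ ^ 2))) d 0 ∧
      |d| ≤ 3 * singPart w v := by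
  have hn : 0 < ‖w‖ := norm_pos_iff.2 hw
  have hl : ∀ x e : V, HasDerivAt (fun t : ℝ => x + t • e) e 0 := fun x e => by
    simpa using ((hasDerivAt_id (0 : ℝ)).smul_const e).const_add x
  have hN := hasDerivAt_norm_line w e₁ hw
  have hP := (hl w e₁).inner ℝ (hl v e₂)
  have hD := (hN.inv (by simpa using hw)).mul
    (((hP.pow 2).div (hN.pow 2) (by simpa using hw)).neg.exp)
  refine ⟨_, hD, ?_⟩
  simp only [zero_smul, add_zero, Pi.pow_apply, Pi.neg_apply, Pi.inv_apply, Pi.div_apply]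
  set n := ‖w‖ with hnd
  set n' := ⟪w, e₁⟫_ℝ / n with hn'
  set p := ⟪w, v⟫_ℝ with hp
  set p' := ⟪w, e₂⟫_ℝ + ⟪e₁, v⟫_ℝ with hp'
  have hn'1 : |n'| ≤ 1 := by
    rw [hn', abs_div, abs_of_pos hn, div_le_one hn]
    calc _ ≤ ‖w‖ * ‖e₁‖ := abs_real_inner_le_norm _ _
      _ ≤ n * 1 := by gcongr
      _ = n := mul_one n
  have hp'1 : |p'| ≤ ‖v‖ + n := by
    have a1 : |⟪w, e₂⟫_ℝ| ≤ n * 1 :=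
      (abs_real_inner_le_norm _ _).trans (by gcongr)
    have a2 : |⟪e₁, v⟫_ℝ| ≤ 1 * ‖v‖ :=
      (abs_real_inner_le_norm _ _).trans (by gcongr)
    calc _ ≤ |⟪w, e₂⟫_ℝ| + |⟪e₁, v⟫_ℝ| := abs_add_le _ _
      _ ≤ _ := by linarith
  set a := p / n with ha
  have hpa : p = a * n := by rw [ha]; field_simp
  have hq : p ^ 2 / n ^ 2 = a ^ 2 := by rw [ha, div_pow]
  obtain ⟨b1, b2, b3⟩ := exp_neg_mul_bounds a
  have hs : singPart w v = (n ^ 2)⁻¹ * ((1 + ‖v‖ + n) * Real.exp (-a ^ 2 / 2)) := by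
    unfold singPart projSq
    rw [← hnd, ← hp, hq]; ring
  rw [hs, hq]
  set E := Real.exp (-a ^ 2)
  set E2 := Real.exp (-a ^ 2 / 2)
  have hE2 : 0 < E2 := Real.exp_pos _
  have hE : 0 < E := Real.exp_pos _
  have key : |-(n' * E) - 2 * p' * (a * E) + 2 * n' * (a ^ 2 * E)| ≤
      3 * ((1 + ‖v‖ + n) * E2) := by
    have c1 : |n' * E| ≤ E2 := by
      rw [abs_mul, abs_of_pos hE]; nlinarith [abs_nonneg n']
    have c2 : |2 * p' * (a * E)| ≤ 2 * ((‖v‖ + n) * E2) := by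
      rw [abs_mul, abs_mul, abs_mul, abs_of_pos hE, abs_two, mul_assoc]
      gcongr
    have c3 : |2 * n' * (a ^ 2 * E)| ≤ 2 * E2 := by
      rw [abs_mul, abs_mul, abs_two, abs_of_nonneg (show 0 ≤ a ^ 2 * E by positivity), mul_assoc]
      calc 2 * (|n'| * (a ^ 2 * E)) ≤ 2 * (1 * E2) := by gcongr
        _ = _ := by ring
    have c4 : 0 ≤ (‖v‖ + n) * E2 := by positivity
    rw [abs_le] at *
    constructor <;> nlinarith
  have hd : ∀ x : ℝ, x = (n ^ 2)⁻¹ * (-(n' * E) - 2 * p' * (a * E) + 2 * n' * (a ^ 2 * E)) →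
      |x| ≤ 3 * ((n ^ 2)⁻¹ * ((1 + ‖v‖ + n) * E2)) := by
    intro x hx
    rw [hx, abs_mul, abs_of_pos (show 0 < (n ^ 2)⁻¹ by positivity)]
    calc _ ≤ (n ^ 2)⁻¹ * (3 * ((1 + ‖v‖ + n) * E2)) := by gcongr
      _ = _ := by ring
  apply hd
  rw [hpa]
  clear_value a p n' p' E E2
  simp
  field_simp
  ring

lemma hasDerivAt_gaussian (w v e₁ e₂ : V) (hw : w ≠ 0) (h₁ : ‖e₁‖ ≤ 1) (h₂ : ‖e₂‖ ≤ 1) :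
    ∃ d : ℝ, HasDerivAt (fun t : ℝ => ‖w + t • e₁‖ * Real.exp (-‖v + t • e₂‖ ^ 2)) d 0 ∧
      |d| ≤ 2 * gaussPart w v := by
  have hn : 0 < ‖w‖ := norm_pos_iff.2 hw
  have hl : HasDerivAt (fun t : ℝ => v + t • e₂) e₂ 0 := by
    simpa using ((hasDerivAt_id (0 : ℝ)).smul_const e₂).const_add v
  have hN := hasDerivAt_norm_line w e₁ hw
  have hD := hN.mul (hl.norm_sq.neg.exp)
  refine ⟨_, hD, ?_⟩
  simp only [zero_smul, add_zero, Pi.neg_apply]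
  have hn'1 : |⟪w, e₁⟫_ℝ / ‖w‖| ≤ 1 := by
    rw [abs_div, abs_of_pos hn, div_le_one hn]
    calc _ ≤ ‖w‖ * ‖e₁‖ := abs_real_inner_le_norm _ _
      _ ≤ ‖w‖ * 1 := by gcongr
      _ = ‖w‖ := mul_one _
  have hq : |⟪v, e₂⟫_ℝ| ≤ ‖v‖ * 1 := (abs_real_inner_le_norm _ _).trans (by gcongr)
  have hE : Real.exp (-‖v‖ ^ 2) ≤ Real.exp (-‖v‖ ^ 2 / 2) := (exp_neg_mul_bounds ‖v‖).2.2
  have hE0 := Real.exp_pos (-‖v‖ ^ 2)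
  have hE20 := Real.exp_pos (-‖v‖ ^ 2 / 2)
  unfold gaussPart
  calc _ ≤ |⟪w, e₁⟫_ℝ / ‖w‖ * Real.exp (-‖v‖ ^ 2)| +
        |‖w‖ * (Real.exp (-‖v‖ ^ 2) * -(2 * ⟪v, e₂⟫_ℝ))| := abs_add_le _ _
    _ = |⟪w, e₁⟫_ℝ / ‖w‖| * Real.exp (-‖v‖ ^ 2) +
        ‖w‖ * (Real.exp (-‖v‖ ^ 2) * (2 * |⟪v, e₂⟫_ℝ|)) := by
        simp only [abs_mul, abs_neg, abs_two, abs_of_pos hE0, abs_norm]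
    _ ≤ 1 * Real.exp (-‖v‖ ^ 2 / 2) +
        ‖w‖ * (Real.exp (-‖v‖ ^ 2 / 2) * (2 * (‖v‖ * 1))) := by gcongr
    _ ≤ 2 * ((1 + ‖v‖) * (1 + ‖w‖) * Real.exp (-‖v‖ ^ 2 / 2)) := by
        have : 0 ≤ ‖v‖ := norm_nonneg v
        nlinarith [mul_nonneg this hE20.le, mul_nonneg hn.le hE20.le]

/-- Differentiability of `f` is not assumed: where it fails, `fderiv` is zero. -/
lemma abs_fderiv_le_of_line {f : V → ℝ} {z e : V} {d B : ℝ}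
    (h : HasDerivAt (fun t : ℝ => f (z + t • e)) d 0) (hd : |d| ≤ B) :
    |fderiv ℝ f z e| ≤ B := by
  by_cases hf : DifferentiableAt ℝ f z
  · have h1 : HasDerivAt (fun t : ℝ => f (z + t • e)) (fderiv ℝ f z e) 0 :=
      hf.hasFDerivAt.hasLineDerivAt e
    rwa [h1.unique h]
  · rw [fderiv_zero_of_not_differentiableAt hf]
    simpa using (abs_nonneg d).trans hd

lemma norm_eV (i : Fin 3) : ‖eV i‖ = 1 := by simp [eV]

lemma abs_apply_eV_le (L : V →L[ℝ] ℝ) (i : Fin 3) : |L (eV i)| ≤ ‖L‖ := by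
  simpa [norm_eV] using L.le_opNorm (eV i)

/-! ### Pointwise bounds for the kernel and the theorem -/

lemma abs_Kker_le {r₀ : V → V → ℝ} {C₂ : ℝ} (hC₂ : 0 < C₂) (hr_db : R0DerivBounds r₀ C₂)
    {Ci κ : ℝ} (hCi : 0 < Ci) (hκ : 0 < κ) (z v : V) (h : z ≠ v) :
    |Kker r₀ Ci κ v z| ≤
      (C₂ + 6 * π * (Ci * κ)) * (gaussPart (z - v) v + singPart (z - v) v) := by
  have hw : 0 < ‖z - v‖ := norm_pos_iff.2 (sub_ne_zero.2 h)
  have hr : |r₀ v z| ≤ C₂ * gaussPart (z - v) v := by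
    refine (hr_db v z).1.trans ?_
    have hj := jap_le (v - z)
    rw [norm_sub_rev] at hj
    unfold gaussPart
    have : jap (v - z) ≤ (1 + ‖v‖) * (1 + ‖z - v‖) := by nlinarith [norm_nonneg v]
    rw [mul_comm (Real.exp _)]
    gcongr
  have hs : ‖z - v‖⁻¹ * Real.exp (-(⟪z - v, v⟫_ℝ ^ 2 / ‖z - v‖ ^ 2)) ≤ singPart (z - v) v := by
    unfold singPart projSq
    have e1 : ‖z - v‖⁻¹ ≤ (‖z - v‖ ^ 2)⁻¹ * (1 + ‖v‖ + ‖z - v‖) := by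
      have : ‖z - v‖⁻¹ = (‖z - v‖ ^ 2)⁻¹ * ‖z - v‖ := by field_simp
      rw [this]; gcongr; linarith [norm_nonneg v]
    gcongr
    have : 0 ≤ ⟪z - v, v⟫_ℝ ^ 2 / ‖z - v‖ ^ 2 := by positivity
    linarith
  have hg : ‖z - v‖ * Real.exp (-‖v‖ ^ 2) ≤ gaussPart (z - v) v := by
    unfold gaussPart
    have e1 : ‖z - v‖ ≤ (1 + ‖v‖) * (1 + ‖z - v‖) := by nlinarith [norm_nonneg v]
    exact mul_le_mul e1 (exp_neg_mul_bounds ‖v‖).2.2 (Real.exp_pos _).le (by positivity)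
  have hs0 : 0 ≤ ‖z - v‖⁻¹ * Real.exp (-(⟪z - v, v⟫_ℝ ^ 2 / ‖z - v‖ ^ 2)) := by positivity
  have hg0 : 0 ≤ ‖z - v‖ * Real.exp (-‖v‖ ^ 2) := by positivity
  unfold Kker
  set S := ‖z - v‖⁻¹ * Real.exp (-(⟪z - v, v⟫_ℝ ^ 2 / ‖z - v‖ ^ 2))
  set G := ‖z - v‖ * Real.exp (-‖v‖ ^ 2)
  have hc : 0 < π * (Ci * κ) := by positivity
  have hSP := singPart_nonneg (z - v) v
  have hGP := gaussPart_nonneg (z - v) v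
  calc |-r₀ v z + Ci * κ * (2 * π * S - π * G)|
      = |-r₀ v z + 2 * (π * (Ci * κ)) * S - (π * (Ci * κ)) * G| := by congr 1; ring
    _ ≤ |r₀ v z| + 2 * (π * (Ci * κ)) * S + (π * (Ci * κ)) * G := by
        rw [abs_le]
        have := mul_nonneg hc.le hs0
        have := mul_nonneg hc.le hg0
        have := neg_abs_le (r₀ v z)
        have := le_abs_self (r₀ v z)
        constructor <;> linarith
    _ ≤ C₂ * gaussPart (z - v) v + 2 * (π * (Ci * κ)) * singPart (z - v) v +
        (π * (Ci * κ)) * gaussPart (z - v) v := by gcongr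
    _ ≤ _ := by nlinarith [mul_nonneg hc.le hSP, mul_nonneg hc.le hGP, mul_nonneg hC₂.le hSP]

/-- Both arguments of the kernel may move; the velocities `(e₁, e₂) = (e, 0)` and `(0, e)` give the
partial derivatives in the second and in the first slot. The hypotheses `hρ`, `hρb` are the
corresponding facts about `r₀`. -/
lemma hasDerivAt_Kker_line {r₀ : V → V → ℝ} {C₂ : ℝ} (hC₂ : 0 < C₂)
    {Ci κ : ℝ} (hCi : 0 < Ci) (hκ : 0 < κ) (z v e₁ e₂ : V) (h : z ≠ v)
    (h₁ : ‖e₁ - e₂‖ ≤ 1) (h₂ : ‖e₂‖ ≤ 1) {ρ : ℝ}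
    (hρ : HasDerivAt (fun t : ℝ => r₀ (v + t • e₂) (z + t • e₁)) ρ 0)
    (hρb : |ρ| ≤ C₂ * gaussPart (z - v) v) :
    ∃ d, HasDerivAt (fun t : ℝ => Kker r₀ Ci κ (v + t • e₂) (z + t • e₁)) d 0 ∧
      |d| ≤ (C₂ + 6 * π * (Ci * κ)) * (gaussPart (z - v) v + singPart (z - v) v) := by
  have hw : z - v ≠ 0 := sub_ne_zero.2 h
  obtain ⟨s, hs, hsb⟩ := hasDerivAt_singular (z - v) v (e₁ - e₂) e₂ hw h₁ h₂
  obtain ⟨g, hg, hgb⟩ := hasDerivAt_gaussian (z - v) v (e₁ - e₂) e₂ hw h₁ h₂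
  refine ⟨-ρ + Ci * κ * (2 * π * s - π * g), ?_, ?_⟩
  · have hD := hρ.neg.add (((hs.const_mul (2 * π)).sub (hg.const_mul π)).const_mul (Ci * κ))
    refine hD.congr_of_eventuallyEq (Eventually.of_forall fun t => ?_)
    have : z + t • e₁ - (v + t • e₂) = z - v + t • (e₁ - e₂) := by rw [smul_sub]; abel
    simp [Kker, this]
  · have hc : 0 < π * (Ci * κ) := by positivity
    have hSP := singPart_nonneg (z - v) v
    have hGP := gaussPart_nonneg (z - v) v
    calc |-ρ + Ci * κ * (2 * π * s - π * g)|
        = |-ρ + 2 * (π * (Ci * κ)) * s - (π * (Ci * κ)) * g| := by congr 1; ring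
      _ ≤ |ρ| + 2 * (π * (Ci * κ)) * |s| + (π * (Ci * κ)) * |g| := by
          refine (abs_sub _ _).trans ?_
          rw [abs_mul (π * (Ci * κ)), abs_of_pos hc]
          gcongr
          refine (abs_add_le _ _).trans ?_
          rw [abs_neg, abs_mul, abs_of_pos (by linarith : 0 < 2 * (π * (Ci * κ)))]
      _ ≤ C₂ * gaussPart (z - v) v + 2 * (π * (Ci * κ)) * (3 * singPart (z - v) v) +
          (π * (Ci * κ)) * (2 * gaussPart (z - v) v) := by gcongr
      _ ≤ _ := by nlinarith [mul_nonneg hc.le hSP, mul_nonneg hc.le hGP, mul_nonneg hC₂.le hSP]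

/-- weighted `L¹` bounds for the kernel `K` and its `z₁`-derivatives. -/
theorem stmt_11 (r₀ : V → V → ℝ)
    (hr_nonneg : ∀ u v : V, 0 ≤ r₀ u v)
    (hr_C1 : ContDiff ℝ 1 (Function.uncurry r₀))
    (C' : ℝ) (hC' : 0 < C') (hr_bd : R0Bounds r₀ C')
    (C₂ : ℝ) (hC₂ : 0 < C₂) (hr_db : R0DerivBounds r₀ C₂)
    (Ci κ : ℝ) (hCi : 0 < Ci) (hκ : 0 < κ) :
    ∀ m : ℝ, 0 ≤ m → ∃ C > 0,
      (∀ z : V, ∫ v : V, jap v ^ m * |Kker r₀ Ci κ v z| ≤ C * jap z ^ (m + 2)) ∧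
      (∀ u : V, ∫ z : V, jap z ^ m * |Kker r₀ Ci κ z u| ≤ C * jap u ^ (m + 2)) ∧
      (∀ z : V, ∫ v : V,
          jap v ^ m * |fderiv ℝ (fun z' => Kker r₀ Ci κ v z') z (eV 0)| ≤ C * jap z ^ (m + 2)) ∧
      (∀ u : V, ∫ z : V,
          jap z ^ m * |fderiv ℝ (fun z' => Kker r₀ Ci κ z' u) z (eV 0)| ≤ C * jap u ^ (m + 2)) := by
  intro m hm
  obtain ⟨C, hC, hI⟩ := exists_integral_bound m hm
  have hA : 0 < C₂ + 6 * π * (Ci * κ) := by positivity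
  have hd : Differentiable ℝ (Function.uncurry r₀) := hr_C1.differentiable one_ne_zero
  have hd₁ : ∀ u : V, Differentiable ℝ (fun v => r₀ v u) := fun u =>
    hd.comp (differentiable_id.prodMk (differentiable_const u))
  have hd₂ : ∀ v : V, Differentiable ℝ (fun u => r₀ v u) := fun v =>
    hd.comp ((differentiable_const v).prodMk differentiable_id)
  have hK := fun z : V => hI z _ (fun v => Kker r₀ Ci κ v z) hA.le
    fun v hv => abs_Kker_le hC₂ hr_db hCi hκ z v hv
  refine ⟨(C₂ + 6 * π * (Ci * κ)) * C, by positivity, hK, hK, fun z => ?_, fun u => ?_⟩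
  · refine hI z _ _ hA.le fun v hv => ?_
    have hρ : HasDerivAt (fun t : ℝ => r₀ (v + t • (0 : V)) (z + t • eV 0))
        (fderiv ℝ (fun u => r₀ v u) z (eV 0)) 0 := by
      simpa [HasLineDerivAt] using ((hd₂ v z).hasFDerivAt.hasLineDerivAt (eV 0))
    have hρb : |fderiv ℝ (fun u => r₀ v u) z (eV 0)| ≤ C₂ * gaussPart (z - v) v := by
      refine (abs_apply_eV_le _ 0).trans ((hr_db v z).2.2.trans ?_)
      unfold gaussPart
      have : 1 ≤ (1 + ‖v‖) * (1 + ‖z - v‖) := by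
        nlinarith [norm_nonneg v, norm_nonneg (z - v),
          mul_nonneg (norm_nonneg v) (norm_nonneg (z - v))]
      gcongr
      exact le_mul_of_one_le_left (Real.exp_pos _).le this
    obtain ⟨d, hd, hdb⟩ := hasDerivAt_Kker_line hC₂ hCi hκ z v (eV 0) 0 hv
      (by simp [norm_eV]) (by simp) hρ hρb
    exact abs_fderiv_le_of_line (by simpa using hd) hdb
  · refine hI u _ _ hA.le fun v hv => ?_
    have hρ : HasDerivAt (fun t : ℝ => r₀ (v + t • eV 0) (u + t • (0 : V)))
        (fderiv ℝ (fun v => r₀ v u) v (eV 0)) 0 := by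
      simpa [HasLineDerivAt] using ((hd₁ u v).hasFDerivAt.hasLineDerivAt (eV 0))
    have hρb : |fderiv ℝ (fun v => r₀ v u) v (eV 0)| ≤ C₂ * gaussPart (u - v) v := by
      refine (abs_apply_eV_le _ 0).trans ((hr_db v u).2.1.trans ?_)
      have hj := jap_le (v - u)
      rw [norm_sub_rev] at hj
      unfold gaussPart
      have : jap (v - u) ≤ (1 + ‖v‖) * (1 + ‖u - v‖) := by
        nlinarith [norm_nonneg v, norm_nonneg (u - v),
          mul_nonneg (norm_nonneg v) (norm_nonneg (u - v))]
      rw [mul_comm (Real.exp _)]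
      gcongr
    obtain ⟨d, hd, hdb⟩ := hasDerivAt_Kker_line hC₂ hCi hκ u v 0 (eV 0) hv
      (by simp [norm_eV]) (by simp [norm_eV]) hρ hρb
    exact abs_fderiv_le_of_line (by simpa using hd) hdb
end
end

section
/- There exist constants Θ > 0, Ψ > 0 and C > 0 such that for every n ∈ ℤ³ with n ≠ 0, every ζ ∈ Ω_n, and every g ∈ L¹(ℝ³;ℂ): ‖g − K_{ζ,n} g‖_{L¹(ℝ³;ℂ)} ≥ C ‖g‖_{L¹(ℝ³;ℂ)}. -/
/-!
Write `w u = ν₀(u) + i n·u - ζ` for the denominator in `Kzn`. Pointwise `|K g| ≤ T |g|`, where `T` is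
the positive integral operator with kernel `k(v,u) = r₀(v,u) / |w(u)|`, so `e = g - K g` satisfies
`|g| ≤ |e| + T |g|` and, after iterating once, `|g| ≤ |e| + T |e| + T² |g|`. It therefore suffices
that `T` is bounded and that `T²` is a strict contraction of `L¹`, uniformly in `n ≠ 0` and `ζ ∈ Ω_n`
(`lintegral_le_of_le_add`).

Since `∫ r₀(v,u) dv = ν₀(u)`, the column sums of `k` are `φ = ν₀ / |w|`, and those of the kernel of
`T²` are `(∫ φ(u) r₀(u,y) du) / |w(y)|`. Three facts bound them.

* Taking `Θ` small and `Ψ` large, for every `u` either `Re ζ ≤ δ ν₀(u)` or `|n·u - Im ζ| ≥ 2 ν₀(u)`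
  (`re_le_or_le_im`). Hence `φ ≤ 1/(1-δ)` everywhere, which is nearly `1`.
* As `n ≠ 0`, `n·u` changes by at least `1` under a unit translation along some axis, so
  `|n·u - Im ζ| ≥ 1/2` on a subset of the ball of radius `2` with volume bounded below
  (`volume_slab`). On it `φ` is smaller than `1` by a fixed amount.
* The Doeblin minorization `r₀(u,y) ≥ m₀ ν₀(y)` for `|u| ≤ 2` shows that this gain is felt
  for every `y`: `∫ φ(u) r₀(u,y) du ≤ (1/(1-δ) - d) ν₀(y)` with `d > 0` independent of `δ`.

For `δ` small compared with `d` the column sums of the kernel of `T²` are at most `1 - d/2`.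
-/


open MeasureTheory Real Filter
open scoped InnerProductSpace
noncomputable section

/-- The region `Ω_n = ℂ \ {ζ : Re ζ > Θ, |Im ζ| < Ψ(1+|n|)(1+Re ζ−Θ)}`. -/
def Om (Θ Ψ : ℝ) (n : Fin 3 → ℤ) : Set ℂ :=
  {ζ : ℂ | ¬ (Θ < ζ.re ∧ |ζ.im| < Ψ * (1 + ‖nV n‖) * (1 + ζ.re - Θ))}

/-- The operator `K_{ζ,n} g (v) = ∫ r₀(v,u) (ν₀(u) + i n·u − ζ)⁻¹ g(u) du`. -/
noncomputable def Kzn (r₀ : V → V → ℝ) (n : Fin 3 → ℤ) (ζ : ℂ) (g : V → ℂ) (v : V) : ℂ :=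
  ∫ u : V, (r₀ v u : ℂ) *
    ((nu0 r₀ u : ℝ) + Complex.I * ((∑ i : Fin 3, (n i : ℝ) * u i : ℝ) : ℂ) - ζ)⁻¹ * g u

/-! ### Iterating a positive integral inequality -/

/-- If a positive kernel has column sums at most `X`, and its square has column sums at most `Λ`,
then `G ≤ E + T G` gives `∫ G ≤ (1 + X) ∫ E + Λ ∫ G`; useful when `Λ < 1`. -/
lemma lintegral_le_of_le_add {k : V → V → ENNReal} (hk : Measurable (Function.uncurry k))
    {X Λ : ENNReal} (h1 : ∀ u, ∫⁻ v, k v u ≤ X)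
    (h2 : ∀ y, ∫⁻ u, (∫⁻ v, k v u) * k u y ≤ Λ)
    {E G : V → ENNReal} (hE : Measurable E) (hG : Measurable G)
    (h : ∀ v, G v ≤ E v + ∫⁻ u, k v u * G u) :
    ∫⁻ v, G v ≤ (1 + X) * (∫⁻ v, E v) + Λ * ∫⁻ v, G v := by
  have hmul : ∀ F : V → ENNReal, Measurable F →
      Measurable (Function.uncurry fun v u => k v u * F u) := fun F hF =>
    hk.mul (hF.comp measurable_snd)
  have hT : ∀ F : V → ENNReal, Measurable F → Measurable fun v => ∫⁻ u, k v u * F u :=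
    fun F hF => (hmul F hF).lintegral_prod_right
  have hk1 : ∀ v, Measurable (k v) := fun v => hk.comp measurable_prodMk_left
  have hk2 : ∀ u, Measurable (fun v => k v u) := fun u => hk.comp measurable_prodMk_right
  have hS : Measurable fun u => ∫⁻ v, k v u :=
    Measurable.lintegral_prod_left (f := k) hk
  have hsw : ∀ F : V → ENNReal, Measurable F →
      ∫⁻ v, ∫⁻ u, k v u * F u = ∫⁻ u, (∫⁻ v, k v u) * F u := by
    intro F hF
    rw [lintegral_lintegral_swap (hmul F hF).aemeasurable]
    exact lintegral_congr fun u => lintegral_mul_const _ (hk2 u)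
  have hsw2 : ∫⁻ v, ∫⁻ u, k v u * (∫⁻ y, k u y * G y) ≤ Λ * ∫⁻ v, G v := by
    rw [hsw _ (hT G hG)]
    have : ∀ u, (∫⁻ v, k v u) * (∫⁻ y, k u y * G y)
        = ∫⁻ y, ((∫⁻ v, k v u) * k u y) * G y := by
      intro u
      rw [← lintegral_const_mul _ (by exact (hk1 u).mul hG : Measurable fun y => k u y * G y)]
      simp only [mul_assoc]
    simp only [this]
    have hm : Measurable (Function.uncurry fun u y => ((∫⁻ v, k v u) * k u y)) :=
      (hS.comp measurable_fst).mul hk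
    rw [lintegral_lintegral_swap (hm.mul (hG.comp measurable_snd)).aemeasurable,
      ← lintegral_const_mul _ hG]
    refine lintegral_mono fun y => ?_
    change ∫⁻ u, ((∫⁻ v, k v u) * k u y) * G y ≤ Λ * G y
    rw [lintegral_mul_const _ (by exact hm.comp measurable_prodMk_right :
      Measurable fun u => (∫⁻ v, k v u) * k u y)]
    gcongr
    exact h2 y
  have hTE : ∫⁻ v, ∫⁻ u, k v u * E u ≤ X * ∫⁻ v, E v := by
    rw [hsw _ hE, ← lintegral_const_mul _ hE]
    exact lintegral_mono fun u => mul_le_mul_left (h1 u) _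
  have hpt : ∀ v, G v ≤ E v + ((∫⁻ u, k v u * E u) + ∫⁻ u, k v u * (∫⁻ y, k u y * G y)) := by
    intro v
    refine (h v).trans ?_
    gcongr
    rw [← lintegral_add_left (by exact (hk1 v).mul hE : Measurable fun u => k v u * E u)]
    refine lintegral_mono fun u => ?_
    rw [← mul_add]
    exact mul_le_mul_right (h u) _
  calc ∫⁻ v, G v
      ≤ ∫⁻ v, (E v + ((∫⁻ u, k v u * E u) + ∫⁻ u, k v u * (∫⁻ y, k u y * G y))) :=
        lintegral_mono hpt
    _ = (∫⁻ v, E v) + ((∫⁻ v, ∫⁻ u, k v u * E u)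
          + ∫⁻ v, ∫⁻ u, k v u * (∫⁻ y, k u y * G y)) := by
        rw [lintegral_add_left hE, lintegral_add_left (hT E hE)]
    _ ≤ (∫⁻ v, E v) + (X * (∫⁻ v, E v) + Λ * ∫⁻ v, G v) := by gcongr
    _ = (1 + X) * (∫⁻ v, E v) + Λ * ∫⁻ v, G v := by ring

/-! ### Bounds on the kernel and the collision frequency -/

lemma le_jap (v : V) : (1 + ‖v‖) / 2 ≤ jap v := by
  refine Real.le_sqrt_of_sq_le ?_
  nlinarith [sq_nonneg (1 - ‖v‖), norm_nonneg v]

lemma integrable_gauss : Integrable fun u : V => rexp (-‖u‖ ^ 2 / 2) := by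
  have h := (GaussianFourier.integrable_cexp_neg_mul_sq_norm_add (V := V) (b := (1 / 2 : ℂ))
    (by norm_num) 0 0).norm
  refine h.congr (Eventually.of_forall fun u => ?_)
  simp only [Complex.norm_exp]
  congr 1
  simp [← Complex.ofReal_pow]
  ring

lemma r0_upper {r₀ : V → V → ℝ} {C' : ℝ} (hC' : 0 < C') (h : R0Bounds r₀ C') (u v : V) :
    r₀ u v ≤ 2 * C' * (1 + ‖v‖) * rexp (-‖u‖ ^ 2 / 2) := by
  refine (h u v).2.trans ?_
  have h1 : jap (u - v) ≤ (1 + ‖u‖) * (1 + ‖v‖) := by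
    refine (jap_le _).trans ?_
    nlinarith [norm_sub_le u v, mul_nonneg (norm_nonneg u) (norm_nonneg v)]
  have h2 : 1 + ‖u‖ ≤ 2 * rexp (‖u‖ ^ 2 / 2) := by
    nlinarith [Real.add_one_le_exp (‖u‖ ^ 2 / 2), sq_nonneg (‖u‖ - 1)]
  have h3 : rexp (-‖u‖ ^ 2) * rexp (‖u‖ ^ 2 / 2) = rexp (-‖u‖ ^ 2 / 2) := by
    rw [← Real.exp_add]; congr 1; ring
  calc C' * (rexp (-‖u‖ ^ 2) * jap (u - v))
      ≤ C' * (rexp (-‖u‖ ^ 2) * ((2 * rexp (‖u‖ ^ 2 / 2)) * (1 + ‖v‖))) := by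
        gcongr
        exact h1.trans (by gcongr)
    _ = 2 * C' * (1 + ‖v‖) * (rexp (-‖u‖ ^ 2) * rexp (‖u‖ ^ 2 / 2)) := by ring
    _ = _ := by rw [h3]

/-- Together with `nu0_upper` this is the Doeblin minorization `r₀(u,v) ≥ m₀ ν₀(v)` on `|u| ≤ 2`. -/
lemma r0_lower {r₀ : V → V → ℝ} {C' : ℝ} (hC' : 0 < C') (h : R0Bounds r₀ C') (u v : V)
    (hu : ‖u‖ ≤ 2) : C'⁻¹ * rexp (-4) / 6 * (1 + ‖v‖) ≤ r₀ u v := by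
  refine le_trans ?_ (h u v).1
  have h1 : (1 + ‖v‖) / 6 ≤ jap (u - v) := by
    refine le_trans ?_ (le_jap _)
    have : ‖v‖ ≤ ‖u‖ + ‖u - v‖ := by
      have := norm_sub_le u (u - v); simpa using this
    linarith [norm_nonneg (u - v)]
  have h2 : rexp (-4) ≤ rexp (-‖u‖ ^ 2) := by
    apply Real.exp_le_exp.2
    nlinarith [norm_nonneg u]
  calc C'⁻¹ * rexp (-4) / 6 * (1 + ‖v‖) = C'⁻¹ * (rexp (-4) * ((1 + ‖v‖) / 6)) := by ring
    _ ≤ _ := by gcongr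

lemma r0_integrable {r₀ : V → V → ℝ} (h0 : ∀ u v, 0 ≤ r₀ u v)
    (hc : Continuous (Function.uncurry r₀)) {C' : ℝ} (hC' : 0 < C') (h : R0Bounds r₀ C') (v : V) :
    Integrable fun u => r₀ u v := by
  refine (integrable_gauss.const_mul (2 * C' * (1 + ‖v‖))).mono' ?_ ?_
  · exact (hc.comp (by fun_prop : Continuous fun u : V => (u, v))).aestronglyMeasurable
  · refine Eventually.of_forall fun u => ?_
    rw [Real.norm_of_nonneg (h0 u v)]
    exact r0_upper hC' h u v

lemma nu0_upper {r₀ : V → V → ℝ} (h0 : ∀ u v, 0 ≤ r₀ u v)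
    (hc : Continuous (Function.uncurry r₀)) {C' : ℝ} (hC' : 0 < C') (h : R0Bounds r₀ C') :
    ∃ c₂ > 0, ∀ v, nu0 r₀ v ≤ c₂ * (1 + ‖v‖) := by
  have hM : 0 ≤ ∫ u : V, rexp (-‖u‖ ^ 2 / 2) := integral_nonneg fun u => (Real.exp_pos _).le
  refine ⟨2 * C' * (∫ u : V, rexp (-‖u‖ ^ 2 / 2)) + 1, by positivity, fun v => ?_⟩
  have h1 := integral_mono (r0_integrable h0 hc hC' h v)
    (integrable_gauss.const_mul (2 * C' * (1 + ‖v‖))) (fun u => r0_upper hC' h u v)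
  rw [integral_const_mul] at h1
  refine (show nu0 r₀ v ≤ _ from h1).trans ?_
  nlinarith [norm_nonneg v]

lemma nu0_lower {r₀ : V → V → ℝ} (h0 : ∀ u v, 0 ≤ r₀ u v)
    (hc : Continuous (Function.uncurry r₀)) {C' : ℝ} (hC' : 0 < C') (h : R0Bounds r₀ C') :
    ∃ c₁ > 0, ∀ v, c₁ * (1 + ‖v‖) ≤ nu0 r₀ v := by
  have hvol : 0 < volume.real (Metric.closedBall (0 : V) 2) :=
    ENNReal.toReal_pos (Metric.measure_closedBall_pos _ _ (by norm_num)).ne'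
      measure_closedBall_lt_top.ne
  refine ⟨volume.real (Metric.closedBall (0 : V) 2) * (C'⁻¹ * rexp (-4) / 6), by positivity,
    fun v => ?_⟩
  have hi := r0_integrable h0 hc hC' h v
  calc _ = ∫ u in Metric.closedBall (0 : V) 2, C'⁻¹ * rexp (-4) / 6 * (1 + ‖v‖) := by
        rw [setIntegral_const, smul_eq_mul]; ring
    _ ≤ ∫ u in Metric.closedBall (0 : V) 2, r₀ u v := by
        refine setIntegral_mono_on (integrableOn_const measure_closedBall_lt_top.ne)
          hi.integrableOn measurableSet_closedBall fun u hu => ?_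
        exact r0_lower hC' h u v (by simpa using hu)
    _ ≤ nu0 r₀ v := setIntegral_le_integral hi (Eventually.of_forall fun u => h0 u v)

/-! ### The set where `n·u` is away from a given value -/

/-- The pairing `n·u`. -/
def ndot (n : Fin 3 → ℤ) (u : V) : ℝ := ∑ i : Fin 3, (n i : ℝ) * u i

lemma continuous_ndot (n : Fin 3 → ℤ) : Continuous (ndot n) := by
  unfold ndot; fun_prop

lemma abs_ndot_le (n : Fin 3 → ℤ) (u : V) : |ndot n u| ≤ ‖nV n‖ * ‖u‖ := by
  have : ndot n u = ⟪nV n, u⟫_ℝ := by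
    simp [ndot, nV, PiLp.inner_apply, mul_comm]
  rw [this]
  exact abs_real_inner_le_norm _ _

/-- The part of the ball of radius `2` on which `n·u` stays away from `b`. -/
def slab (n : Fin 3 → ℤ) (b : ℝ) : Set V := {u | ‖u‖ ≤ 2 ∧ 1 / 2 ≤ |ndot n u - b|}

lemma measurableSet_slab (n : Fin 3 → ℤ) (b : ℝ) : MeasurableSet (slab n b) := by
  have := continuous_ndot n
  exact ((isClosed_le (f := fun u : V => ‖u‖) (by fun_prop) continuous_const).inter
    (isClosed_le (g := fun u => |ndot n u - b|) continuous_const (by fun_prop))).measurableSet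

lemma slab_subset (n : Fin 3 → ℤ) (b : ℝ) : slab n b ⊆ Metric.closedBall 0 2 := by
  intro u hu; simpa using hu.1

/-- Every `u` in the unit ball, or its translate by a unit vector `eᵢ` with `nᵢ ≠ 0`, lies in the
slab. -/
lemma volume_slab {n : Fin 3 → ℤ} (hn : n ≠ 0) (b : ℝ) :
    volume.real (Metric.closedBall (0 : V) 1) / 2 ≤ volume.real (slab n b) := by
  obtain ⟨i, hi⟩ := Function.ne_iff.1 hn
  have hi1 : (1 : ℝ) ≤ |(n i : ℝ)| := by
    exact_mod_cast Int.one_le_abs hi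
  have hadd : ∀ u, ndot n (u + eV i) = ndot n u + n i := by
    intro u
    simp [ndot, eV, mul_add, Finset.sum_add_distrib]
  have hsub : Metric.closedBall (0 : V) 1 ⊆ slab n b ∪ (fun u => u + eV i) ⁻¹' slab n b := by
    intro u hu
    have hu1 : ‖u‖ ≤ 1 := by simpa using hu
    by_cases h : 1 / 2 ≤ |ndot n u - b|
    · exact Or.inl ⟨by linarith, h⟩
    · refine Or.inr ⟨?_, ?_⟩
      · have := norm_add_le u (eV i)
        have h1 : ‖eV i‖ = 1 := by simp [eV]
        linarith
      · rw [hadd]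
        have h2 := abs_sub_abs_le_abs_sub (n i : ℝ) (-(ndot n u - b))
        rw [abs_neg] at h2
        have h3 : ndot n u + n i - b = n i - -(ndot n u - b) := by ring
        rw [h3]
        linarith [not_le.1 h]
  have hfin : volume (slab n b) ≠ ⊤ :=
    ((measure_mono (slab_subset n b)).trans_lt measure_closedBall_lt_top).ne
  have hpre : volume ((fun u => u + eV i) ⁻¹' slab n b) = volume (slab n b) :=
    measure_preimage_add_right _ _ _
  have h1 := (measure_mono (μ := volume) hsub).trans (measure_union_le _ _)
  rw [hpre] at h1
  have h2 := ENNReal.toReal_mono (ENNReal.add_ne_top.2 ⟨hfin, hfin⟩) h1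
  rw [ENNReal.toReal_add hfin hfin] at h2
  simp only [Measure.real]
  linarith

/-! ### Lower bounds on the denominator -/

/-- For `ζ ∈ Ω_n` the real part of `ζ` is harmless wherever the imaginary part of the denominator
does not dominate. -/
lemma re_le_or_le_im {r₀ : V → V → ℝ} {c₁ δ : ℝ} (hc₁ : 0 < c₁) (hδ : 0 < δ)
    (hlow : ∀ v, c₁ * (1 + ‖v‖) ≤ nu0 r₀ v) {n : Fin 3 → ℤ} {ζ : ℂ}
    (hζ : ζ ∈ Om (min 1 (δ * c₁)) ((2 + c₁⁻¹) / δ) n) (u : V) :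
    ζ.re ≤ δ * nu0 r₀ u ∨ 2 * nu0 r₀ u ≤ |ndot n u - ζ.im| := by
  by_cases ha : ζ.re ≤ δ * nu0 r₀ u
  · exact Or.inl ha
  right
  push Not at ha
  have hl := hlow u
  have hu0 := norm_nonneg u
  have hN := norm_nonneg (nV n)
  have hν : c₁ ≤ nu0 r₀ u := by nlinarith
  have hΘ : min 1 (δ * c₁) < ζ.re :=
    lt_of_le_of_lt ((min_le_right _ _).trans (by gcongr)) ha
  have hb : (2 + c₁⁻¹) / δ * (1 + ‖nV n‖) * (1 + ζ.re - min 1 (δ * c₁)) ≤ |ζ.im| := by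
    by_contra h
    exact hζ ⟨hΘ, not_le.1 h⟩
  have hb2 : (2 + c₁⁻¹) * (1 + ‖nV n‖) * nu0 r₀ u ≤ |ζ.im| := by
    refine le_trans ?_ hb
    have h1 : δ * nu0 r₀ u ≤ 1 + ζ.re - min 1 (δ * c₁) := by
      linarith [min_le_left 1 (δ * c₁)]
    calc (2 + c₁⁻¹) * (1 + ‖nV n‖) * nu0 r₀ u
        = (2 + c₁⁻¹) / δ * (1 + ‖nV n‖) * (δ * nu0 r₀ u) := by field_simp
      _ ≤ _ := by gcongr
  have hu : ‖u‖ ≤ c₁⁻¹ * nu0 r₀ u := by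
    rw [inv_mul_eq_div, le_div_iff₀ hc₁]; nlinarith
  have hnd : |ndot n u| ≤ ‖nV n‖ * (c₁⁻¹ * nu0 r₀ u) :=
    (abs_ndot_le n u).trans (by gcongr)
  have h3 := abs_sub_abs_le_abs_sub ζ.im (ndot n u)
  rw [abs_sub_comm] at h3
  have h4 : 0 < c₁⁻¹ * nu0 r₀ u := mul_pos (inv_pos.2 hc₁) (hc₁.trans_le hν)
  nlinarith [mul_nonneg hN (hc₁.le.trans hν)]

/-- The denominator in `Kzn`. -/
def wden (r₀ : V → V → ℝ) (n : Fin 3 → ℤ) (ζ : ℂ) (u : V) : ℂ :=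
  (nu0 r₀ u : ℝ) + Complex.I * ((ndot n u : ℝ) : ℂ) - ζ

lemma wden_re (r₀ : V → V → ℝ) (n : Fin 3 → ℤ) (ζ : ℂ) (u : V) :
    (wden r₀ n ζ u).re = nu0 r₀ u - ζ.re := by simp [wden]

lemma wden_im (r₀ : V → V → ℝ) (n : Fin 3 → ℤ) (ζ : ℂ) (u : V) :
    (wden r₀ n ζ u).im = ndot n u - ζ.im := by simp [wden]

lemma wden_lower {r₀ : V → V → ℝ} {δ : ℝ} (hδ0 : 0 < δ) {n : Fin 3 → ℤ} {ζ : ℂ}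
    {u : V} (hν : 0 < nu0 r₀ u)
    (h : ζ.re ≤ δ * nu0 r₀ u ∨ 2 * nu0 r₀ u ≤ |ndot n u - ζ.im|) :
    (1 - δ) * nu0 r₀ u ≤ ‖wden r₀ n ζ u‖ := by
  rcases h with h | h
  · have h1 := (le_abs_self _).trans (Complex.abs_re_le_norm (wden r₀ n ζ u))
    rw [wden_re] at h1
    linarith
  · have h1 := Complex.abs_im_le_norm (wden r₀ n ζ u)
    rw [wden_im] at h1
    nlinarith

/-- The gain on the slab, where `ν₀ ≤ 1/(2κ)`. -/
lemma wden_lower_slab {r₀ : V → V → ℝ} {δ κ : ℝ} (hκ : 0 < κ) (hκ1 : κ ≤ 1)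
    (hδ : δ ≤ κ ^ 2 / 4) (hδ1 : δ ≤ 1) {n : Fin 3 → ℤ} {ζ : ℂ}
    {u : V} (hν : 0 < nu0 r₀ u) (hνκ : κ * nu0 r₀ u ≤ 1 / 2)
    (h : ζ.re ≤ δ * nu0 r₀ u ∨ 2 * nu0 r₀ u ≤ |ndot n u - ζ.im|)
    (hu : 1 / 2 ≤ |ndot n u - ζ.im|) :
    (1 + κ ^ 2 / 8) * nu0 r₀ u ≤ ‖wden r₀ n ζ u‖ := by
  rcases h with h | h
  · refine abs_le_of_sq_le_sq' ?_ (norm_nonneg _) |>.2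
    rw [← Complex.normSq_eq_norm_sq, Complex.normSq_apply, wden_re, wden_im]
    have h1 : (κ * nu0 r₀ u) ^ 2 ≤ (ndot n u - ζ.im) ^ 2 := by
      rw [← sq_abs (ndot n u - ζ.im)]
      exact pow_le_pow_left₀ (by positivity) (hνκ.trans hu) 2
    have h2 : ((1 - δ) * nu0 r₀ u) ^ 2 ≤ (nu0 r₀ u - ζ.re) ^ 2 :=
      pow_le_pow_left₀ (mul_nonneg (by linarith) hν.le) (by linarith) 2
    have h3 : (1 + κ ^ 2 / 8) ^ 2 ≤ (1 - δ) ^ 2 + κ ^ 2 := by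
      have : κ ^ 2 ≤ 1 := by nlinarith
      nlinarith [sq_nonneg κ, sq_nonneg δ]
    have h4 := mul_le_mul_of_nonneg_right h3 (sq_nonneg (nu0 r₀ u))
    nlinarith
  · have h1 := Complex.abs_im_le_norm (wden r₀ n ζ u)
    rw [wden_im] at h1
    have : κ ^ 2 ≤ 1 := by nlinarith
    nlinarith

lemma measurable_nu0 {r₀ : V → V → ℝ} (hc : Continuous (Function.uncurry r₀)) :
    Measurable (nu0 r₀) :=
  (StronglyMeasurable.integral_prod_right (ν := volume) (f := fun v u => r₀ u v)
    (hc.comp continuous_swap).stronglyMeasurable).measurable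

lemma measurable_wden {r₀ : V → V → ℝ} (hc : Continuous (Function.uncurry r₀))
    (n : Fin 3 → ℤ) (ζ : ℂ) : Measurable (wden r₀ n ζ) := by
  have h1 := measurable_nu0 hc
  have h2 := (continuous_ndot n).measurable
  unfold wden
  fun_prop

/-! ### The contraction estimate -/

/-- The lower bound for measurable `g`, given the bounds on `φ = ν₀ / |w|`: at most `x` everywhere,
and at most `x - η` on the slab. -/
lemma lower_bound_of_phi {r₀ : V → V → ℝ} (h0 : ∀ u v, 0 ≤ r₀ u v)
    (hc : Continuous (Function.uncurry r₀)) (hi : ∀ v, Integrable fun u => r₀ u v)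
    (hν : ∀ v, 0 < nu0 r₀ v) {m : ℝ}
    (hm : ∀ u y, ‖u‖ ≤ 2 → m * nu0 r₀ y ≤ r₀ u y)
    {x η d : ℝ} (hx1 : 1 ≤ x) (hx2 : x ≤ 2) (hη : 0 ≤ η) (hd0 : 0 < d) (hd1 : d ≤ 1)
    (hxd : x ^ 2 ≤ 1 + d / 2) {n : Fin 3 → ℤ} {ζ : ℂ}
    (hdv : d ≤ η * m * volume.real (slab n ζ.im))
    (hφ : ∀ u, nu0 r₀ u * ‖wden r₀ n ζ u‖⁻¹ ≤ x)
    (hφs : ∀ u ∈ slab n ζ.im, nu0 r₀ u * ‖wden r₀ n ζ u‖⁻¹ ≤ x - η)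
    {g : V → ℂ} (hg : StronglyMeasurable g) (hgi : Integrable g) :
    d / 6 * ∫ v : V, ‖g v‖ ≤ ∫ v : V, ‖g v - Kzn r₀ n ζ g v‖ := by
  set W : V → ℝ := fun u => ‖wden r₀ n ζ u‖⁻¹ with hW
  have hW0 : ∀ u, 0 ≤ W u := fun u => by positivity
  have hwm := measurable_wden hc n ζ
  have hWm : Measurable W := hwm.norm.inv
  have hνm := measurable_nu0 hc
  set k : V → V → ENNReal := fun v u => ENNReal.ofReal (r₀ v u * W u) with hk
  have hkm : Measurable (Function.uncurry k) :=
    (hc.measurable.mul (hWm.comp measurable_snd)).ennreal_ofReal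
  have hsum : ∀ u, ∫⁻ v, k v u = ENNReal.ofReal (nu0 r₀ u * W u) := by
    intro u
    rw [hk, ← ofReal_integral_eq_lintegral_ofReal ((hi u).mul_const _)
      (Eventually.of_forall fun v => mul_nonneg (h0 v u) (hW0 u)), integral_mul_const]
    rfl
  have h1 : ∀ u, ∫⁻ v, k v u ≤ ENNReal.ofReal x := fun u => by
    rw [hsum]; exact ENNReal.ofReal_le_ofReal (hφ u)
  have hφ0 : ∀ u, 0 ≤ nu0 r₀ u * W u := fun u => mul_nonneg (hν u).le (hW0 u)
  -- Doeblin: the gain on the slab is seen from every `y`.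
  have hsq : ∀ y, ∫ u, (nu0 r₀ u * W u) * r₀ u y ≤ (x - d) * nu0 r₀ y := by
    intro y
    have hfin : volume (slab n ζ.im) ≠ ⊤ :=
      ((measure_mono (slab_subset n ζ.im)).trans_lt measure_closedBall_lt_top).ne
    have hind : Integrable ((slab n ζ.im).indicator fun _ : V => η * m * nu0 r₀ y) :=
      (integrable_indicator_iff (measurableSet_slab _ _)).2 (integrableOn_const hfin)
    have hle : ∀ u, (nu0 r₀ u * W u) * r₀ u y ≤
        x * r₀ u y - (slab n ζ.im).indicator (fun _ : V => η * m * nu0 r₀ y) u := by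
      intro u
      by_cases hu : u ∈ slab n ζ.im
      · rw [Set.indicator_of_mem hu]
        have ha := mul_le_mul_of_nonneg_right (hφs u hu) (h0 u y)
        have hb := mul_le_mul_of_nonneg_left (hm u y hu.1) hη
        simp only [hW]
        nlinarith
      · rw [Set.indicator_of_notMem hu, sub_zero]
        exact mul_le_mul_of_nonneg_right (hφ u) (h0 u y)
    have hint : Integrable fun u => x * r₀ u y
        - (slab n ζ.im).indicator (fun _ : V => η * m * nu0 r₀ y) u :=
      ((hi y).const_mul x).sub hind
    have hmono := integral_mono_of_nonneg
      (Eventually.of_forall fun u => mul_nonneg (hφ0 u) (h0 u y)) hint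
      (Eventually.of_forall hle)
    refine hmono.trans ?_
    rw [integral_sub ((hi y).const_mul x) hind, integral_const_mul,
      integral_indicator (measurableSet_slab _ _), setIntegral_const, smul_eq_mul]
    change x * nu0 r₀ y - _ ≤ _
    nlinarith [mul_le_mul_of_nonneg_right hdv (hν y).le]
  have h2 : ∀ y, ∫⁻ u, (∫⁻ v, k v u) * k u y ≤ ENNReal.ofReal (1 - d / 2) := by
    intro y
    have hpt : ∀ u, (∫⁻ v, k v u) * k u y
        = ENNReal.ofReal (((nu0 r₀ u * W u) * r₀ u y) * W y) := by
      intro u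
      rw [hsum, hk, ← ENNReal.ofReal_mul (hφ0 u), mul_assoc (nu0 r₀ u * W u)]
    have hint : Integrable fun u => (nu0 r₀ u * W u) * r₀ u y := by
      refine ((hi y).const_mul x).mono' ?_ (Eventually.of_forall fun u => ?_)
      · exact ((hνm.mul hWm).mul (hi y).1.measurable_mk |>.aestronglyMeasurable).congr
          ((hi y).1.ae_eq_mk.mono fun u hu => by simp [hu])
      · rw [Real.norm_of_nonneg (mul_nonneg (hφ0 u) (h0 u y))]
        exact mul_le_mul_of_nonneg_right (hφ u) (h0 u y)
    simp only [hpt]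
    rw [← ofReal_integral_eq_lintegral_ofReal (hint.mul_const _)
      (Eventually.of_forall fun u => mul_nonneg (mul_nonneg (hφ0 u) (h0 u y)) (hW0 y)),
      integral_mul_const]
    refine ENNReal.ofReal_le_ofReal ?_
    calc _ ≤ (x - d) * nu0 r₀ y * W y := mul_le_mul_of_nonneg_right (hsq y) (hW0 y)
      _ = (x - d) * (nu0 r₀ y * W y) := by ring
      _ ≤ (x - d) * x := mul_le_mul_of_nonneg_left (hφ y) (by linarith)
      _ ≤ 1 - d / 2 := by nlinarith
  have hKdef : ∀ v, Kzn r₀ n ζ g v = ∫ u, (r₀ v u : ℂ) * (wden r₀ n ζ u)⁻¹ * g u := fun v => rfl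
  have hKm : StronglyMeasurable (Kzn r₀ n ζ g) := by
    have hm3 : Measurable (Function.uncurry fun v u =>
        (r₀ v u : ℂ) * (wden r₀ n ζ u)⁻¹ * g u) :=
      ((Complex.measurable_ofReal.comp hc.measurable).mul
        (hwm.inv.comp measurable_snd)).mul (hg.measurable.comp measurable_snd)
    exact StronglyMeasurable.integral_prod_right (f := fun v u =>
      (r₀ v u : ℂ) * (wden r₀ n ζ u)⁻¹ * g u) hm3.stronglyMeasurable
  have hKle : ∀ v, ‖Kzn r₀ n ζ g v‖ₑ ≤ ∫⁻ u, k v u * ‖g u‖ₑ := by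
    intro v
    rw [hKdef]
    refine (enorm_integral_le_lintegral_enorm _).trans (lintegral_mono fun u => ?_)
    rw [enorm_mul]
    refine mul_le_mul_left (le_of_eq ?_) _
    rw [← ofReal_norm]
    simp only [hk, hW, norm_mul, norm_inv, Complex.norm_real, Real.norm_of_nonneg (h0 v u)]
  have hGm : Measurable fun v => ‖g v‖ₑ := hg.measurable.enorm
  have hEm : Measurable fun v => ‖g v - Kzn r₀ n ζ g v‖ₑ :=
    (hg.measurable.sub hKm.measurable).enorm
  have hmain := lintegral_le_of_le_add hkm h1 h2 hEm hGm (fun v => by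
    have h3 : ‖g v‖ₑ ≤ ‖g v - Kzn r₀ n ζ g v‖ₑ + ‖Kzn r₀ n ζ g v‖ₑ := by
      simpa using enorm_add_le (g v - Kzn r₀ n ζ g v) (Kzn r₀ n ζ g v)
    exact h3.trans (by gcongr; exact hKle v))
  -- Finiteness of `∫ |K g|`, so that the Bochner integral on the right is not a junk value.
  have hKfin : ∫⁻ v, ‖Kzn r₀ n ζ g v‖ₑ < ⊤ := by
    have hs : ∫⁻ v, ∫⁻ u, k v u * ‖g u‖ₑ = ∫⁻ u, (∫⁻ v, k v u) * ‖g u‖ₑ := by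
      rw [lintegral_lintegral_swap (hkm.mul (hGm.comp measurable_snd)).aemeasurable]
      exact lintegral_congr fun u =>
        lintegral_mul_const _ (hkm.comp measurable_prodMk_right)
    calc _ ≤ ∫⁻ v, ∫⁻ u, k v u * ‖g u‖ₑ := lintegral_mono hKle
      _ ≤ ∫⁻ u, ENNReal.ofReal x * ‖g u‖ₑ := by
          rw [hs]; exact lintegral_mono fun u => mul_le_mul_left (h1 u) _
      _ = ENNReal.ofReal x * ∫⁻ u, ‖g u‖ₑ := lintegral_const_mul _ hGm
      _ < ⊤ := ENNReal.mul_lt_top ENNReal.ofReal_lt_top hgi.2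
  have hKi : Integrable (Kzn r₀ n ζ g) := ⟨hKm.aestronglyMeasurable, hKfin⟩
  have hei : Integrable fun v => g v - Kzn r₀ n ζ g v := hgi.sub hKi
  rw [← ofReal_integral_norm_eq_lintegral_enorm hgi,
    ← ofReal_integral_norm_eq_lintegral_enorm hei] at hmain
  have hG0 : 0 ≤ ∫ v, ‖g v‖ := integral_nonneg fun _ => norm_nonneg _
  have hE0 : 0 ≤ ∫ v, ‖g v - Kzn r₀ n ζ g v‖ := integral_nonneg fun _ => norm_nonneg _
  rw [← ENNReal.ofReal_one, ← ENNReal.ofReal_add (by norm_num) (by linarith),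
    ← ENNReal.ofReal_mul (by linarith), ← ENNReal.ofReal_mul (by linarith),
    ← ENNReal.ofReal_add (mul_nonneg (by linarith) hE0) (mul_nonneg (by linarith) hG0),
    ENNReal.ofReal_le_ofReal_iff
      (add_nonneg (mul_nonneg (by linarith) hE0) (mul_nonneg (by linarith) hG0))] at hmain
  nlinarith

/-- uniform lower bound `‖(1−K_{ζ,n})g‖_{L¹} ≥ C ‖g‖_{L¹}`. -/
theorem stmt_13 (r₀ : V → V → ℝ)
    (hr_nonneg : ∀ u v : V, 0 ≤ r₀ u v)
    (hr_C1 : ContDiff ℝ 1 (Function.uncurry r₀))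
    (hr_detbal : R0DetailedBalance r₀)
    (C' : ℝ) (hC' : 0 < C') (hr_bd : R0Bounds r₀ C')
    (C₂ : ℝ) (hC₂ : 0 < C₂) (hr_db : R0DerivBounds r₀ C₂) :
    ∃ Θ > 0, ∃ Ψ > 0, ∃ C > 0, (∀ v : V, Θ < nu0 r₀ v) ∧
      ∀ n : Fin 3 → ℤ, n ≠ 0 → ∀ ζ ∈ Om Θ Ψ n, ∀ g : V → ℂ, Integrable g →
        C * ∫ v : V, ‖g v‖ ≤ ∫ v : V, ‖g v - Kzn r₀ n ζ g v‖ := by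
  have hc := hr_C1.continuous
  have hi := r0_integrable hr_nonneg hc hC' hr_bd
  obtain ⟨c₁, hc₁, hlow⟩ := nu0_lower hr_nonneg hc hC' hr_bd
  obtain ⟨c₂, hc₂, hup⟩ := nu0_upper hr_nonneg hc hC' hr_bd
  have hνc : ∀ v, c₁ ≤ nu0 r₀ v := fun v => by nlinarith [hlow v, norm_nonneg v]
  have hν : ∀ v, 0 < nu0 r₀ v := fun v => hc₁.trans_le (hνc v)
  -- `m` is the Doeblin constant; `κ` makes `κ ν₀ ≤ 1/2` on the ball of radius `2`.
  set m : ℝ := C'⁻¹ * rexp (-4) / 6 / c₂ with hm_def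
  have hm0 : 0 < m := by positivity
  have hm : ∀ u y, ‖u‖ ≤ 2 → m * nu0 r₀ y ≤ r₀ u y := by
    intro u y hu
    refine le_trans ?_ (r0_lower hC' hr_bd u y hu)
    calc m * nu0 r₀ y ≤ m * (c₂ * (1 + ‖y‖)) := by gcongr; exact hup y
      _ = _ := by rw [hm_def]; field_simp
  set κ : ℝ := min 1 (1 / (6 * c₂)) with hκ_def
  have hκ : 0 < κ := by positivity
  have hκ1 : κ ≤ 1 := min_le_left _ _
  have hκν : ∀ u : V, ‖u‖ ≤ 2 → κ * nu0 r₀ u ≤ 1 / 2 := by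
    intro u hu
    calc κ * nu0 r₀ u ≤ 1 / (6 * c₂) * (c₂ * (1 + 2)) :=
          mul_le_mul (min_le_right _ _) ((hup u).trans (by gcongr)) (hν u).le (by positivity)
      _ = 1 / 2 := by field_simp; norm_num
  have hvol : 0 < volume.real (Metric.closedBall (0 : V) 1) :=
    ENNReal.toReal_pos (Metric.measure_closedBall_pos _ _ (by norm_num)).ne'
      measure_closedBall_lt_top.ne
  set d : ℝ := min 1 (κ ^ 2 / 16 * m * (volume.real (Metric.closedBall (0 : V) 1) / 2)) with hd_def
  have hd0 : 0 < d := by positivity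
  have hd1 : d ≤ 1 := min_le_left _ _
  set δ : ℝ := min (κ ^ 2 / 4) (d / 12) with hδ_def
  have hδ0 : 0 < δ := by positivity
  have hδκ : δ ≤ κ ^ 2 / 4 := min_le_left _ _
  have hδd : δ ≤ d / 12 := min_le_right _ _
  have hx1 : 1 ≤ (1 - δ)⁻¹ := (one_le_inv₀ (by linarith)).2 (by linarith)
  have hx2 : (1 - δ)⁻¹ ≤ 1 + 2 * δ := by
    rw [inv_le_iff_one_le_mul₀ (by linarith)]
    nlinarith
  refine ⟨min 1 (δ * c₁), by positivity, (2 + c₁⁻¹) / δ, by positivity, d / 6, by positivity,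
    fun v => ?_, ?_⟩
  · calc min 1 (δ * c₁) ≤ δ * c₁ := min_le_right _ _
      _ < c₁ := by nlinarith
      _ ≤ nu0 r₀ v := hνc v
  intro n hn ζ hζ g hgi
  have hdich := re_le_or_le_im (r₀ := r₀) hc₁ hδ0 hlow hζ
  have hwpos : ∀ u, 0 < ‖wden r₀ n ζ u‖ := fun u =>
    lt_of_lt_of_le (mul_pos (by linarith) (hν u)) (wden_lower hδ0 (hν u) (hdich u))
  have hφ : ∀ u, nu0 r₀ u * ‖wden r₀ n ζ u‖⁻¹ ≤ (1 - δ)⁻¹ := by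
    intro u
    rw [← div_eq_mul_inv, div_le_iff₀ (hwpos u), inv_mul_eq_div, le_div_iff₀ (by linarith)]
    linarith [wden_lower hδ0 (hν u) (hdich u)]
  have hφs : ∀ u ∈ slab n ζ.im,
      nu0 r₀ u * ‖wden r₀ n ζ u‖⁻¹ ≤ (1 - δ)⁻¹ - κ ^ 2 / 16 := by
    intro u hu
    have h1 := wden_lower_slab hκ hκ1 hδκ (by linarith) (hν u) (hκν u hu.1) (hdich u) hu.2
    refine le_trans ?_ (sub_le_sub_right hx1 _)
    rw [← div_eq_mul_inv, div_le_iff₀ (hwpos u)]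
    have h2 : κ ^ 2 ≤ 1 := by nlinarith
    have h3 := mul_le_mul_of_nonneg_left h1 (by linarith : 0 ≤ 1 - κ ^ 2 / 16)
    have h4 : 1 ≤ (1 - κ ^ 2 / 16) * (1 + κ ^ 2 / 8) := by nlinarith [sq_nonneg κ]
    have h5 := mul_le_mul_of_nonneg_right h4 (hν u).le
    linarith
  have hdv : d ≤ κ ^ 2 / 16 * m * volume.real (slab n ζ.im) :=
    (min_le_right _ _).trans (by gcongr; exact volume_slab hn _)
  have key := lower_bound_of_phi hr_nonneg hc hi hν hm hx1 (by linarith) (by positivity)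
    hd0 hd1 (by nlinarith) hdv hφ hφs hgi.1.stronglyMeasurable_mk (hgi.congr hgi.1.ae_eq_mk)
  have hae := hgi.1.ae_eq_mk
  have hK : ∀ v, Kzn r₀ n ζ (hgi.1.mk g) v = Kzn r₀ n ζ g v := fun v =>
    integral_congr_ae (hae.mono fun u hu => by simp only [hu])
  rw [integral_congr_ae (hae.mono fun u hu => by simp only [hu] : (fun v => ‖g v‖) =ᵐ[volume]
      fun v => ‖hgi.1.mk g v‖),
    integral_congr_ae (hae.mono fun u hu => by simp only [hu, hK] :
      (fun v => ‖g v - Kzn r₀ n ζ g v‖) =ᵐ[volume]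
      fun v => ‖hgi.1.mk g v - Kzn r₀ n ζ (hgi.1.mk g) v‖)]
  exact key
end
end
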